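/- Let P be a fullerene, and let a k-loop L_k border a 5-belt of P. Then the facets of L_k are pairwise different. -/

import Mathlib

open Set

noncomputable section

/-- The ambient space `ℝ³`. -/
abbrev E3 := EuclideanSpace ℝ (Fin 3)

/-- The cyclic successor in `Fin k`. -/
def nxt {k : ℕ} (i : Fin k) : Fin k := ⟨(i.1 + 1) % k, Nat.mod_lt _ i.pos⟩

/-- The cyclic predecessor in `Fin k`. -/
def prv {k : ℕ} (i : Fin k) : Fin k := ⟨(i.1 + (k - 1)) % k, Nat.mod_lt _ i.pos⟩

/-- A convex polytope in `ℝ³`: the convex hull of a finite set of points. -/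
def IsPolytope (P : Set E3) : Prop := ∃ V : Finset E3, P = convexHull ℝ (V : Set E3)

/-- The dimension of a subset of `ℝ³` (the dimension of its affine hull). -/
def setDim (A : Set E3) : ℕ := Module.finrank ℝ ↥(vectorSpan ℝ A)

/-- A face of a polytope: a nonempty closed convex extreme subset. -/
def IsFaceOf (F P : Set E3) : Prop :=
  F.Nonempty ∧ IsClosed F ∧ Convex ℝ F ∧ IsExtreme ℝ P F

/-- A facet: a `2`-dimensional face. -/
def IsFacetOf (F P : Set E3) : Prop := IsFaceOf F P ∧ setDim F = 2

/-- An edge: a `1`-dimensional face. -/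
def IsEdgeOf (F P : Set E3) : Prop := IsFaceOf F P ∧ setDim F = 1

/-- A vertex: a point whose singleton is a face. -/
def IsVertexOf (v : E3) (P : Set E3) : Prop := IsFaceOf {v} P

/-- The set of facets of `P`. -/
def facets (P : Set E3) : Set (Set E3) := {F | IsFacetOf F P}

/-- A simple 3-polytope: a 3-dimensional convex polytope each of whose vertices
is contained in exactly 3 facets. -/
def IsSimplePolytope3 (P : Set E3) : Prop :=
  IsPolytope P ∧ setDim P = 3 ∧
    ∀ v : E3, IsVertexOf v P → {F | IsFacetOf F P ∧ v ∈ F}.ncard = 3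

/-- The number of edges of a facet `F` of `P`. -/
def facetEdges (P F : Set E3) : ℕ := {e | IsEdgeOf e P ∧ e ⊆ F}.ncard

/-- `pVec P k` is the number of `k`-gonal facets of `P`. -/
def pVec (P : Set E3) (k : ℕ) : ℕ := {F | IsFacetOf F P ∧ facetEdges P F = k}.ncard

/-- A (mathematical) fullerene: a simple 3-polytope with all facets pentagons
and hexagons. -/
def IsFullerene (P : Set E3) : Prop :=
  IsSimplePolytope3 P ∧ ∀ F, IsFacetOf F P → facetEdges P F = 5 ∨ facetEdges P F = 6

/-- A `k`-loop in `P` (`k ≥ 2`): a cyclic sequence of facets in which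
(cyclically) consecutive facets intersect in an edge; a `1`-loop is a single facet. -/
def IsLoop (P : Set E3) {k : ℕ} (L : Fin k → Set E3) : Prop :=
  0 < k ∧ (∀ i, IsFacetOf (L i) P) ∧ (2 ≤ k → ∀ i, IsEdgeOf (L i ∩ L (nxt i)) P)

/-- A simple loop: a loop with pairwise different facets. -/
def IsSimpleLoop (P : Set E3) {k : ℕ} (L : Fin k → Set E3) : Prop :=
  IsLoop P L ∧ Function.Injective L

/-- A `k`-belt (`k ≥ 3`): a `k`-loop such that for `k = 3` the three facets have empty
total intersection, and for `k ≥ 4` two facets intersect iff they are cyclically successive. -/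
def IsBelt (P : Set E3) {k : ℕ} (L : Fin k → Set E3) : Prop :=
  3 ≤ k ∧ IsLoop P L ∧
    (k = 3 → ∀ i, L i ∩ L (nxt i) ∩ L (nxt (nxt i)) = ∅) ∧
    (4 ≤ k → ∀ p q, p ≠ q → ((L p ∩ L q).Nonempty ↔ q = nxt p ∨ p = nxt q))

/-- A flag 3-polytope: a simple 3-polytope different from the tetrahedron
(i.e. not having exactly 4 facets) without 3-belts. -/
def IsFlag3Polytope (P : Set E3) : Prop :=
  IsSimplePolytope3 P ∧ (facets P).ncard ≠ 4 ∧ ∀ B : Fin 3 → Set E3, ¬ IsBelt P B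

/-- `γ` is the simple edge-cycle of `P` traced by the cyclically ordered distinct
vertices `v 0, …, v (n-1)` (`n ≥ 3`), consecutive ones joined by edges of `P`. -/
def IsSimpleEdgeCycleVia (P γ : Set E3) {n : ℕ} (v : Fin n → E3) : Prop :=
  3 ≤ n ∧ Function.Injective v ∧ (∀ i, IsVertexOf (v i) P) ∧
    (∀ i, IsEdgeOf (segment ℝ (v i) (v (nxt i))) P) ∧
    γ = ⋃ i, segment ℝ (v i) (v (nxt i))

/-- A simple edge-cycle in the graph of `P`. -/
def IsSimpleEdgeCycle (P γ : Set E3) : Prop :=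
  ∃ (n : ℕ) (v : Fin n → E3), IsSimpleEdgeCycleVia P γ v

/-- `C` is a connected component of the set `A`. -/
def IsCompOf (C A : Set E3) : Prop := ∃ x ∈ A, C = connectedComponentIn A x

/-- The loop `L` is obtained by walking round the simple edge-cycle `γ` inside the
connected component `C` of `∂P ∖ γ`: the facets of `L` lie on the side `C`, and the
edges of `γ`, in cyclic order, lie in the facets of `L` in cyclic order (the loop
index advancing exactly when the facet changes, and making exactly one turn). -/
def WalksRound (P γ C : Set E3) {k : ℕ} (L : Fin k → Set E3) : Prop :=
  IsLoop P L ∧ (∀ i, intrinsicInterior ℝ (L i) ⊆ C) ∧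
    ∃ (n : ℕ) (v : Fin n → E3) (φ : Fin n → Fin k),
      IsSimpleEdgeCycleVia P γ v ∧
      (∀ i, segment ℝ (v i) (v (nxt i)) ⊆ L (φ i)) ∧
      (∀ i, φ (nxt i) = φ i ∨ φ (nxt i) = nxt (φ i)) ∧
      Function.Surjective φ ∧
      (2 ≤ k → (Finset.univ.filter (fun i : Fin n => φ (nxt i) ≠ φ i)).card = k)

/-- Two loops border each other: they are obtained by walking round the same simple
edge-cycle `γ` in the two different connected components of `∂P ∖ γ`. -/
def Borders (P : Set E3) {k₁ k₂ : ℕ} (L₁ : Fin k₁ → Set E3) (L₂ : Fin k₂ → Set E3) : Prop :=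
  ∃ γ C₁ C₂ : Set E3, IsCompOf C₁ (frontier P \ γ) ∧ IsCompOf C₂ (frontier P \ γ) ∧
    C₁ ≠ C₂ ∧ WalksRound P γ C₁ L₁ ∧ WalksRound P γ C₂ L₂

/-- A loop surrounds the facet `F` if it borders the `1`-loop `(F)`. -/
def Surrounds (P : Set E3) {k : ℕ} (L : Fin k → Set E3) (F : Set E3) : Prop :=
  IsFacetOf F P ∧ Borders P L (fun _ : Fin 1 => F)

/-- The number of edges of `P` lying in the facet `F` and in the set `γ`. -/
def edgesInCommon (P F γ : Set E3) : ℕ := {e | IsEdgeOf e P ∧ e ⊆ F ∧ e ⊆ γ}.ncard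
/-- A simple 3-polytope all of whose facets are pentagons and hexagons except for
at most one exceptional facet, which is a quadrangle or a heptagon. -/
def IsAlmostFullerene (P : Set E3) : Prop :=
  IsSimplePolytope3 P ∧
    (∀ F, IsFacetOf F P → facetEdges P F ∈ ({4, 5, 6, 7} : Set ℕ)) ∧
    {F | IsFacetOf F P ∧ (facetEdges P F = 4 ∨ facetEdges P F = 7)}.ncard ≤ 1

/-- The (combinatorial) dodecahedron: a simple 3-polytope with all facets pentagons. -/
def IsDodecahedron (P : Set E3) : Prop :=
  IsSimplePolytope3 P ∧ ∀ F, IsFacetOf F P → facetEdges P F = 5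

/-- `e` and `e'` are opposite edges of the hexagonal facet `H`: they are disjoint and no
edge of `H` meets both of them. -/
def OppositeEdges (P H e e' : Set E3) : Prop :=
  IsEdgeOf e P ∧ IsEdgeOf e' P ∧ e ⊆ H ∧ e' ⊆ H ∧ e ∩ e' = ∅ ∧
    ∀ e'', IsEdgeOf e'' P → e'' ⊆ H → (e'' ∩ e).Nonempty → e'' ≠ e → e'' ∩ e' = ∅

/-- A cap: a pentagonal facet `F₀` together with a surrounding 5-belt of pentagons. -/
def IsCapOf (P F₀ : Set E3) (L : Fin 5 → Set E3) : Prop :=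
  IsFacetOf F₀ P ∧ facetEdges P F₀ = 5 ∧ (∀ i, facetEdges P (L i) = 5) ∧
    IsBelt P L ∧ Surrounds P L F₀

/-- The number of 5-belts of `P` (counted as sets of facets). -/
def fiveBeltCount (P : Set E3) : ℕ :=
  {S : Set (Set E3) | ∃ B : Fin 5 → Set E3, IsBelt P B ∧ S = Set.range B}.ncard

/-- The structure of the `k`-th fullerene of Family I: two caps separated by `k`
hexagonal 5-belts, each bordering the next (for `k = 0` the caps border each other,
giving the dodecahedron). -/
def FamilyI (P : Set E3) (k : ℕ) : Prop :=
  ∃ (F₀ F₀' : Set E3) (L L' : Fin 5 → Set E3) (B : ℕ → Fin 5 → Set E3),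
    IsCapOf P F₀ L ∧ IsCapOf P F₀' L' ∧
    (∀ i < k, IsBelt P (B i) ∧ ∀ j, facetEdges P (B i j) = 6) ∧
    (∀ i, i + 1 < k → Borders P (B i) (B (i + 1))) ∧
    (0 < k → Borders P L (B 0) ∧ Borders P (B (k - 1)) L') ∧
    (k = 0 → Borders P L L') ∧
    facets P = {F₀, F₀'} ∪ Set.range L ∪ Set.range L' ∪ ⋃ i ∈ Set.Iio k, Set.range (B i)

/-- `P` is obtained from `Q` by an `(s,k;t₀,t₁)`-truncation with new edge `Enew`:
`P` is cut off from `Q` by a halfspace `{f ≤ c}` whose boundary plane crosses exactly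
two edges `E₀ ≠ E₁` of a `k`-gonal facet `F` of `Q`, cutting off exactly `s` vertices,
all belonging to `F`; `G₀` and `G₁` are the facets meeting `F` along `E₀` and `E₁`, and
they are `t₀`- and `t₁`-gons; `Enew` is the new edge dividing `F`. -/
def IsTruncation (s k t₀ t₁ : ℕ) (Q P Enew : Set E3) : Prop :=
  IsSimplePolytope3 Q ∧ IsSimplePolytope3 P ∧
    ∃ (F E₀ E₁ G₀ G₁ : Set E3) (f : E3 →ₗ[ℝ] ℝ) (c : ℝ),
      IsFacetOf F Q ∧ facetEdges Q F = k ∧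
      IsEdgeOf E₀ Q ∧ IsEdgeOf E₁ Q ∧ E₀ ≠ E₁ ∧ E₀ ⊆ F ∧ E₁ ⊆ F ∧
      IsFacetOf G₀ Q ∧ IsFacetOf G₁ Q ∧ G₀ ≠ F ∧ G₁ ≠ F ∧ E₀ ⊆ G₀ ∧ E₁ ⊆ G₁ ∧
      facetEdges Q G₀ = t₀ ∧ facetEdges Q G₁ = t₁ ∧
      P = Q ∩ {x | f x ≤ c} ∧
      (∀ e, IsEdgeOf e Q → (∃ x ∈ e, c < f x) → (∃ x ∈ e, f x < c) → e = E₀ ∨ e = E₁) ∧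
      (∃ x ∈ E₀, c < f x) ∧ (∃ x ∈ E₀, f x < c) ∧
      (∃ x ∈ E₁, c < f x) ∧ (∃ x ∈ E₁, f x < c) ∧
      (∀ v, IsVertexOf v Q → f v ≠ c) ∧
      {v | IsVertexOf v Q ∧ c < f v}.ncard = s ∧
      (∀ v, IsVertexOf v Q → c < f v → v ∈ F) ∧
      Enew = F ∩ {x | f x = c}

/-- Combinatorial equivalence of polytopes: an inclusion-preserving bijection
between the sets of faces. -/
def CombEquiv (P Q : Set E3) : Prop :=
  ∃ φ : {A : Set E3 // IsFaceOf A P} ≃ {A : Set E3 // IsFaceOf A Q},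
    ∀ A B : {A : Set E3 // IsFaceOf A P}, A.1 ⊆ B.1 ↔ (φ A).1 ⊆ (φ B).1

/-- Combinatorial equivalence sending the face `Ep` of `P` to the face `Eq` of `Q`. -/
def CombEquivMapping (P Q Ep Eq : Set E3) : Prop :=
  ∃ φ : {A : Set E3 // IsFaceOf A P} ≃ {A : Set E3 // IsFaceOf A Q},
    (∀ A B : {A : Set E3 // IsFaceOf A P}, A.1 ⊆ B.1 ↔ (φ A).1 ⊆ (φ B).1) ∧
    ∀ h : IsFaceOf Ep P, ((φ ⟨Ep, h⟩) : {A : Set E3 // IsFaceOf A Q}).1 = Eq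

/-- The straightening of `P` along the edge `E` is defined: `P` is combinatorially
obtained from some simple 3-polytope `Q` by an `(s,k)`-truncation whose new edge
corresponds to `E`. -/
def StraighteningDefined (P E : Set E3) : Prop :=
  ∃ (s k t₀ t₁ : ℕ) (Q P₁ E₁ : Set E3),
    IsTruncation s k t₀ t₁ Q P₁ E₁ ∧ CombEquivMapping P P₁ E E₁

/-- `P` is obtained from `Q` by one of the truncations
`(1;4,5)`, `(1;5,5)`, `(2,6;4,5)`, `(2,6;5,5)`, `(2,6;5,6)`, `(2,7;5,5)`, `(2,7;5,6)`. -/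
def FullereneStep (Q P : Set E3) : Prop :=
  ∃ (s k t₀ t₁ : ℕ) (Enew : Set E3), IsTruncation s k t₀ t₁ Q P Enew ∧
    ((s = 1 ∧ (({t₀, t₁} : Finset ℕ) = {4, 5} ∨ ({t₀, t₁} : Finset ℕ) = {5, 5})) ∨
     (s = 2 ∧ k = 6 ∧ (({t₀, t₁} : Finset ℕ) = {4, 5} ∨ ({t₀, t₁} : Finset ℕ) = {5, 5} ∨
        ({t₀, t₁} : Finset ℕ) = {5, 6})) ∨
     (s = 2 ∧ k = 7 ∧ (({t₀, t₁} : Finset ℕ) = {5, 5} ∨ ({t₀, t₁} : Finset ℕ) = {5, 6})))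

/-!
Every facet of a fullerene contains an even number of the edges between consecutive members of a
closed chain of three or four facets. So these edges form a coboundary modulo 2: they are the edges
between two sides of the vertex set, one of which contains at most six pentagons. Peeling off layers
of this side while counting vertices shows that it is a single vertex or an edge. Hence a fullerene
has neither 3-belts nor 4-belts.

Now let `γ` separate the loop `L` from the 5-belt `B`, and let two edges of `γ` on the same facet of
`L` border the belt facets `B p` and `B q`. These are equal, adjacent, or have a common neighbour in
the belt. Since this chain of belt facets does not close up with the facet of `L` to a 3-belt or a
4-belt, successive edges in which it meets that facet share an endpoint, and these edges belong to
`γ`. So the walk round `γ` does not leave the facet between the two given edges: they belong to the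
same member of `L`.
-/

section CyclicSuccessor

variable {k : ℕ}

lemma val_nxt_cases (i : Fin k) :
    i.1 + 1 < k ∧ (nxt i).1 = i.1 + 1 ∨ i.1 + 1 = k ∧ (nxt i).1 = 0 := by
  obtain h | h := (Nat.succ_le_of_lt i.2).lt_or_eq
  · exact Or.inl ⟨h, Nat.mod_eq_of_lt h⟩
  · exact Or.inr ⟨h, (congrArg (· % k) h).trans (Nat.mod_self k)⟩

lemma nxt_injective : Function.Injective (nxt (k := k)) := fun i j h => by
  have hi := val_nxt_cases i
  have hj := val_nxt_cases j
  rw [h] at hi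
  exact Fin.ext (by omega)

lemma nxt_ne (hk : 2 ≤ k) (i : Fin k) : nxt i ≠ i := fun h => by
  have := val_nxt_cases i
  rw [h] at this
  omega

lemma nxt_nxt_ne (hk : 3 ≤ k) (i : Fin k) : nxt (nxt i) ≠ i := fun h => by
  have hi := val_nxt_cases i
  have hi' := val_nxt_cases (nxt i)
  rw [h] at hi'
  omega

end CyclicSuccessor

section Combinatorics

open Finset
open scoped Classical symmDiff

section ChainEdges

variable {Φ : Type*} {k : ℕ}

/-- The edges between consecutive members of a cyclic sequence of facets. -/
def chainEdges (B : Fin k → Φ) : Finset (Finset Φ) :=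
  Finset.univ.image fun i => {B i, B (nxt i)}

lemma chainEdges_injective (h3 : 3 ≤ k) {B : Fin k → Φ} (hB : Function.Injective B) :
    Function.Injective fun i => ({B i, B (nxt i)} : Finset Φ) := fun i j h => by
  dsimp only at h
  have hi : B i ∈ ({B j, B (nxt j)} : Finset Φ) := h ▸ mem_insert_self _ _
  have hj : B j ∈ ({B i, B (nxt i)} : Finset Φ) := h ▸ mem_insert_self _ _
  simp only [Finset.mem_insert, Finset.mem_singleton, hB.eq_iff] at hi hj
  obtain rfl | rfl := hi
  · rfl
  · exact (hj.resolve_right (nxt_nxt_ne h3 j).symm).symm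

lemma card_chainEdges (h3 : 3 ≤ k) {B : Fin k → Φ} (hB : Function.Injective B) :
    #(chainEdges B) = k := by
  rw [chainEdges, card_image_of_injective _ (chainEdges_injective h3 hB), card_univ,
    Fintype.card_fin]

lemma even_card_filter_mem_chainEdges (h3 : 3 ≤ k) {B : Fin k → Φ}
    (hB : Function.Injective B) (F : Φ) : Even #{e ∈ chainEdges B | F ∈ e} := by
  rw [chainEdges, filter_image, card_image_of_injective _ (chainEdges_injective h3 hB)]
  by_cases hF : F ∈ Set.range B
  · obtain ⟨j, rfl⟩ := hF
    obtain ⟨i, rfl⟩ := Finite.surjective_of_injective nxt_injective j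
    have heq : ({a | B (nxt i) ∈ ({B a, B (nxt a)} : Finset Φ)} : Finset (Fin k)) = {i, nxt i} := by
      ext a
      simp [hB.eq_iff, nxt_injective.eq_iff, or_comm, eq_comm]
    rw [heq, card_pair (nxt_ne (by omega) i).symm]
    exact even_two
  · rw [filter_false_of_mem fun i _ h => hF ?_]
    · simp
    · obtain rfl | rfl : F = B i ∨ F = B (nxt i) := by simpa using h
      exacts [⟨i, rfl⟩, ⟨nxt i, rfl⟩]

end ChainEdges

/-- The vertex–facet incidences of the boundary of a simple 3-polytope, together with the values of
a generic linear function at the vertices. A face is encoded by the set of facets containing it: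
edges by two-element sets, facets by singletons, and the whole polytope by `∅`. -/
structure SimpleSphere (V Φ : Type*) [Fintype V] where
  facetsAt : V → Finset Φ
  height : V → ℝ
  card_facetsAt : ∀ v, #(facetsAt v) = 3
  height_injective : Function.Injective height
  card_edge : ∀ e : Finset Φ, #e = 2 → ∀ v, e ⊆ facetsAt v → #{w | e ⊆ facetsAt w} = 2
  le_of_forall_edge_le : ∀ (σ : Finset Φ) (v : V), σ ⊆ facetsAt v →
    (∀ e, σ ⊆ e → #e = 2 → e ⊆ facetsAt v → ∀ w, e ⊆ facetsAt w → height w ≤ height v) →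
    ∀ w, σ ⊆ facetsAt w → height w ≤ height v

namespace SimpleSphere

variable {V Φ : Type*} [Fintype V] (S : SimpleSphere V Φ)

/-- The vertices of the face encoded by `σ`. -/
def verts (σ : Finset Φ) : Finset V := {v | σ ⊆ S.facetsAt v}

/-- The edges at the vertex `v`. -/
def edgesAt (v : V) : Finset (Finset Φ) := powersetCard 2 (S.facetsAt v)

variable {S} {v w : V} {e σ : Finset Φ} {F G : Φ} {X : Finset V}

@[simp] lemma mem_verts : v ∈ S.verts σ ↔ σ ⊆ S.facetsAt v := by simp [verts]

lemma mem_verts_singleton : v ∈ S.verts {F} ↔ F ∈ S.facetsAt v := by simp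

lemma mem_edgesAt : e ∈ S.edgesAt v ↔ e ⊆ S.facetsAt v ∧ #e = 2 := mem_powersetCard

lemma card_edgesAt (v : V) : #(S.edgesAt v) = 3 := by
  simp [edgesAt, S.card_facetsAt]

lemma card_verts (he : e ∈ S.edgesAt v) : #(S.verts e) = 2 :=
  S.card_edge e (mem_edgesAt.1 he).2 v (mem_edgesAt.1 he).1

lemma card_verts_le_two (he : #e = 2) : #(S.verts e) ≤ 2 := by
  obtain h | ⟨v, hv⟩ := (S.verts e).eq_empty_or_nonempty
  · simp [h]
  · exact (card_verts (mem_edgesAt.2 ⟨mem_verts.1 hv, he⟩)).le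

lemma exists_verts_eq_pair (he : e ∈ S.edgesAt v) : ∃ w ≠ v, S.verts e = {v, w} := by
  have hv : v ∈ S.verts e := mem_verts.2 (mem_edgesAt.1 he).1
  obtain ⟨w, hw⟩ := card_eq_one.1 ((card_erase_of_mem hv).trans (by rw [card_verts he]))
  refine ⟨w, (mem_erase.1 (hw ▸ mem_singleton_self w)).1, ?_⟩
  rw [← insert_erase hv, hw]

lemma card_filter_mem_edgesAt (hF : F ∈ S.facetsAt v) : #{e ∈ S.edgesAt v | F ∈ e} = 2 := by
  have hcompl : {e ∈ S.edgesAt v | F ∉ e} = powersetCard 2 ((S.facetsAt v).erase F) := by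
    ext e
    simp only [mem_filter, mem_edgesAt, mem_powersetCard, subset_erase]
    tauto
  have := card_filter_add_card_filter_not (s := S.edgesAt v) (F ∈ ·)
  rw [hcompl, card_powersetCard, card_erase_of_mem hF, S.card_facetsAt, card_edgesAt] at this
  simpa using this

lemma eq_or_eq_of_mem_edgesAt {e₀ e₁ : Finset Φ} (h₀ : e₀ ∈ S.edgesAt v) (h₁ : e₁ ∈ S.edgesAt v)
    (hne : e₀ ≠ e₁) (hF₀ : F ∈ e₀) (hF₁ : F ∈ e₁) (he : e ∈ S.edgesAt v) (hF : F ∈ e) :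
    e = e₀ ∨ e = e₁ := by
  have hsub : {e₀, e₁} ⊆ {e ∈ S.edgesAt v | F ∈ e} := by
    rw [Finset.insert_subset_iff, Finset.singleton_subset_iff]
    exact ⟨mem_filter.2 ⟨h₀, hF₀⟩, mem_filter.2 ⟨h₁, hF₁⟩⟩
  have heq := eq_of_subset_of_card_le hsub
    (by rw [card_filter_mem_edgesAt ((mem_edgesAt.1 h₀).1 hF₀), card_pair hne])
  have hmem : e ∈ ({e₀, e₁} : Finset (Finset Φ)) := heq ▸ mem_filter.2 ⟨he, hF⟩
  simpa using hmem

lemma exists_mem_inter_of_edgesAt {e e' : Finset Φ} (he : e ∈ S.edgesAt v)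
    (he' : e' ∈ S.edgesAt v) : ∃ F, F ∈ e ∧ F ∈ e' := by
  rw [mem_edgesAt] at he he'
  have hunion := card_le_card (union_subset he.1 he'.1)
  have := card_union_add_card_inter e e'
  rw [S.card_facetsAt] at hunion
  obtain ⟨F, hF⟩ := card_pos.1 (show 0 < #(e ∩ e') by omega)
  exact ⟨F, mem_inter.1 hF⟩

lemma sum_card_verts_inter (𝒢 : Finset Φ) (X : Finset V) :
    ∑ F ∈ 𝒢, #(S.verts {F} ∩ X) = ∑ v ∈ X, #(S.facetsAt v ∩ 𝒢) := by
  simp_rw [inter_comm (S.verts _), inter_comm (S.facetsAt _), ← filter_mem_eq_inter,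
    mem_verts_singleton]
  exact sum_card_bipartiteAbove_eq_sum_card_bipartiteBelow (fun F v => F ∈ S.facetsAt v)

variable [Fintype Φ]

/-- Every vertex of a facet lies on exactly two of its edges. -/
lemma sum_edges_sum_verts {M : Type*} [AddCommMonoid M] (F : Φ) (f : V → M) :
    ∑ e : Finset Φ with #e = 2 ∧ F ∈ e, ∑ v ∈ S.verts e, f v = 2 • ∑ v ∈ S.verts {F}, f v := by
  rw [sum_comm' (t' := S.verts {F}) (s' := fun v => {e ∈ S.edgesAt v | F ∈ e}), smul_sum]
  · refine sum_congr rfl fun v hv => ?_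
    rw [sum_const, card_filter_mem_edgesAt (mem_verts_singleton.1 hv)]
  · intro e v
    simp only [mem_filter, Finset.mem_univ, true_and, mem_verts, mem_edgesAt,
      Finset.singleton_subset_iff]
    exact ⟨fun h => ⟨⟨⟨h.2, h.1.1⟩, h.1.2⟩, h.2 h.1.2⟩, fun h => ⟨⟨h.1.1.2, h.1.2⟩, h.1.1.1⟩⟩

variable (S) in
/-- The coboundary of `X`: the edges with exactly one end in `X`. -/
def cutEdges (X : Finset V) : Finset (Finset Φ) := {e | #e = 2 ∧ #(S.verts e ∩ X) = 1}

variable (S) in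
/-- The facets containing an edge of the coboundary of `X`. -/
def cutFacets (X : Finset V) : Finset Φ := {F | ∃ e ∈ S.cutEdges X, F ∈ e}

lemma mem_cutEdges : e ∈ S.cutEdges X ↔ #e = 2 ∧ #(S.verts e ∩ X) = 1 := by simp [cutEdges]

lemma mem_cutFacets : F ∈ S.cutFacets X ↔ ∃ e ∈ S.cutEdges X, F ∈ e := by simp [cutFacets]

lemma subset_cutFacets (he : e ∈ S.cutEdges X) : e ⊆ S.cutFacets X :=
  fun _ hF => mem_cutFacets.2 ⟨e, he, hF⟩

lemma mem_cutEdges_iff_odd (he : #e = 2) : e ∈ S.cutEdges X ↔ Odd #(S.verts e ∩ X) := by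
  have := (Finset.card_le_card (Finset.inter_subset_left (s₂ := X))).trans
    (card_verts_le_two (S := S) he)
  rw [mem_cutEdges, and_iff_right he]
  interval_cases #(S.verts e ∩ X) <;> decide

lemma exists_mem_edgesAt_of_mem_cutEdges (he : e ∈ S.cutEdges X) :
    ∃ v ∈ X, e ∈ S.edgesAt v := by
  rw [mem_cutEdges] at he
  obtain ⟨v, hv⟩ := card_pos.1 (he.2.symm ▸ one_pos)
  rw [Finset.mem_inter, mem_verts] at hv
  exact ⟨v, hv.2, mem_edgesAt.2 ⟨hv.1, he.1⟩⟩

lemma mem_cutEdges_iff_of_verts_eq {w : V} (he : e ∈ S.edgesAt v) (hvw : v ≠ w)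
    (hverts : S.verts e = {v, w}) (hv : v ∈ X) : e ∈ S.cutEdges X ↔ w ∉ X := by
  rw [mem_cutEdges, and_iff_right (mem_edgesAt.1 he).2, hverts, Finset.insert_inter_of_mem hv]
  by_cases hw : w ∈ X <;> simp [hw, hvw]

lemma cutEdges_compl : S.cutEdges Xᶜ = S.cutEdges X := by
  ext e
  by_cases he : ∃ v, e ∈ S.edgesAt v
  · obtain ⟨v, hv⟩ := he
    have := card_inter_add_card_sdiff (S.verts e) X
    rw [card_verts hv] at this
    simp only [mem_cutEdges, ← sdiff_eq_inter_compl]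
    omega
  · refine iff_of_false (fun h => ?_) fun h => ?_ <;>
      exact he ((exists_mem_edgesAt_of_mem_cutEdges h).imp fun _ h => h.2)

/-- The local-maximum property of the height function forces connectedness of the face `σ`. -/
lemma exists_cutEdge_superset (hv : v ∈ S.verts σ) (hvX : v ∈ X) (hw : w ∈ S.verts σ)
    (hwX : w ∉ X) : ∃ e ∈ S.cutEdges X, σ ⊆ e := by
  obtain ⟨m, hm, hmax⟩ := exists_max_image (S.verts σ) S.height ⟨v, hv⟩
  wlog hmX : m ∉ X generalizing X v w
  · rw [← cutEdges_compl]
    exact this hw (mem_compl.2 hwX) hv (notMem_compl.2 hvX) (notMem_compl.2 (not_not.1 hmX))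
  obtain ⟨u, hu, humax⟩ := exists_max_image (S.verts σ ∩ X) S.height
    ⟨v, Finset.mem_inter.2 ⟨hv, hvX⟩⟩
  simp only [Finset.mem_inter, mem_verts] at hu hm hmax humax
  by_contra! hcon
  have hmu : S.height m ≤ S.height u := by
    refine S.le_of_forall_edge_le σ u hu.1 (fun e hσ he heu x hex => ?_) m hm
    refine humax x ⟨hσ.trans hex, by_contra fun hxX => hcon e ?_ hσ⟩
    have hu' := mem_edgesAt.2 ⟨heu, he⟩
    obtain ⟨y, hy, hverts⟩ := exists_verts_eq_pair hu'
    have hx : x ∈ ({u, y} : Finset V) := hverts ▸ mem_verts.2 hex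
    obtain rfl | rfl : x = u ∨ x = y := by simpa using hx
    · exact absurd hu.2 hxX
    · exact (mem_cutEdges_iff_of_verts_eq hu' hy.symm hverts hu.2).2 hxX
  exact hmX (S.height_injective (le_antisymm hmu (hmax u hu.1)) ▸ hu.2)

lemma exists_mem_cutEdges (hF : F ∈ S.facetsAt v) (hvX : v ∈ X) (hFw : F ∈ S.facetsAt w)
    (hwX : w ∉ X) : ∃ e ∈ S.cutEdges X, F ∈ e := by
  simpa using exists_cutEdge_superset (mem_verts_singleton.2 hF) hvX (mem_verts_singleton.2 hFw) hwX

lemma verts_subset_of_notMem_cutFacets (hF : F ∉ S.cutFacets X) (hv : F ∈ S.facetsAt v)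
    (hvX : v ∈ X) : S.verts {F} ⊆ X := fun _ hw => by_contra fun hwX =>
  hF (mem_cutFacets.2 (exists_mem_cutEdges hv hvX (mem_verts_singleton.1 hw) hwX))

lemma even_card_filter_mem_cutEdges (F : Φ) : Even #{e ∈ S.cutEdges X | F ∈ e} := by
  have hsum : ∑ e : Finset Φ with #e = 2 ∧ F ∈ e, #(S.verts e ∩ X) = 2 * #(S.verts {F} ∩ X) := by
    have h := sum_edges_sum_verts (S := S) F fun v => if v ∈ X then 1 else 0
    simpa only [← card_filter, filter_mem_eq_inter, smul_eq_mul] using h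
  have heven := (even_sum_iff_even_card_odd _).1 (hsum ▸ even_two_mul _)
  convert heven using 2
  ext e
  simp only [mem_filter, Finset.mem_univ, true_and]
  refine ⟨fun h => ⟨⟨(mem_cutEdges.1 h.1).1, h.2⟩, ?_⟩, fun h => ⟨?_, h.1.2⟩⟩
  · exact (mem_cutEdges_iff_odd (mem_cutEdges.1 h.1).1).1 h.1
  · exact (mem_cutEdges_iff_odd h.1.1).2 h.2

lemma cutEdges_erase (hv : v ∈ X) : S.cutEdges (X.erase v) = S.cutEdges X ∆ S.edgesAt v := by
  ext e
  by_cases he : #e = 2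
  · rw [Finset.mem_symmDiff, mem_cutEdges_iff_odd he, mem_cutEdges_iff_odd he, mem_edgesAt,
      ← mem_verts, inter_erase]
    by_cases hev : v ∈ S.verts e
    · have := card_erase_add_one (Finset.mem_inter.2 ⟨hev, hv⟩)
      rw [← this, Nat.odd_add_one]
      tauto
    · rw [erase_eq_of_notMem fun h => hev (Finset.mem_inter.1 h).1]
      tauto
  · simp [Finset.mem_symmDiff, mem_cutEdges, mem_edgesAt, he]

lemma card_cutEdges_erase (hv : v ∈ X) : #(S.cutEdges (X.erase v)) +
    2 * #(S.cutEdges X ∩ S.edgesAt v) = #(S.cutEdges X) + 3 := by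
  have h := card_sdiff_add_card_inter (S.cutEdges X) (S.edgesAt v)
  have h' := card_sdiff_add_card_inter (S.edgesAt v) (S.cutEdges X)
  rw [cutEdges_erase hv, symmDiff_def, Finset.sup_eq_union,
    card_union_of_disjoint disjoint_sdiff_sdiff]
  rw [Finset.inter_comm, card_edgesAt] at h'
  omega

lemma cutEdges_erase_subset (hv : v ∈ X) :
    S.cutEdges (X.erase v) ⊆ S.cutEdges X ∪ S.edgesAt v := by
  rw [cutEdges_erase hv]
  exact symmDiff_subset_union

section Cochains

omit [Fintype Φ]
variable [Finite Φ]

lemma sum_verts_eq_of_forall_ne {M : Finset (Finset Φ)} {g : V → ZMod 2} {e' : Finset Φ}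
    (heven : Even #{e ∈ M | F ∈ e}) (hM : ∀ e ∈ M, #e = 2) (he' : #e' = 2) (hF : F ∈ e')
    (h : ∀ e, #e = 2 → F ∈ e → e ≠ e' → ∑ x ∈ S.verts e, g x = if e ∈ M then 1 else 0) :
    ∑ x ∈ S.verts e', g x = if e' ∈ M then 1 else 0 := by
  cases nonempty_fintype Φ
  have hmem : e' ∈ ({e | #e = 2 ∧ F ∈ e} : Finset (Finset Φ)) := by simp [he', hF]
  have hsum := sum_edges_sum_verts (S := S) F g
  have hcount : ∑ e : Finset Φ with #e = 2 ∧ F ∈ e, (if e ∈ M then (1 : ZMod 2) else 0) = 0 := by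
    rw [sum_boole, filter_filter, ← (ZMod.natCast_eq_zero_iff_even).2 heven]
    congr 2
    ext e
    simp only [mem_filter, Finset.mem_univ, true_and]
    exact ⟨fun h => ⟨h.2, h.1.2⟩, fun h => ⟨⟨hM e h.1, h.2⟩, h.1⟩⟩
  rw [CharTwo.two_nsmul, ← hcount, ← add_sum_erase _ _ hmem, ← add_sum_erase _ _ hmem] at hsum
  refine add_right_cancel (hsum.trans (congrArg _ (sum_congr rfl fun e he => ?_).symm))
  obtain ⟨hne, he⟩ := mem_erase.1 he
  obtain ⟨-, he2, hFe⟩ := mem_filter.1 he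
  exact h e he2 hFe hne

/-- One step of a sweep in the height direction: the conditions on two lower edges of `v` agree,
because these edges span a facet whose other vertices have all been swept. -/
lemma sum_verts_eq_of_lower_edges {M : Finset (Finset Φ)} {g : V → ZMod 2} {s : Finset V}
    (heven : ∀ F, Even #{e ∈ M | F ∈ e}) (hM : ∀ e ∈ M, #e = 2)
    (hs : ∀ x, x ∈ insert v s ↔ S.height x ≤ S.height v)
    (hg : ∀ e, #e = 2 → S.verts e ⊆ s → ∑ x ∈ S.verts e, g x = if e ∈ M then 1 else 0)
    {e₀ e₁ : Finset Φ} (h₀ : e₀ ∈ S.edgesAt v) (hs₀ : S.verts e₀ ⊆ insert v s)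
    (hg₀ : ∑ x ∈ S.verts e₀, g x = if e₀ ∈ M then 1 else 0)
    (h₁ : e₁ ∈ S.edgesAt v) (hs₁ : S.verts e₁ ⊆ insert v s) :
    ∑ x ∈ S.verts e₁, g x = if e₁ ∈ M then 1 else 0 := by
  obtain rfl | hne := eq_or_ne e₀ e₁
  · exact hg₀
  obtain ⟨A, hA₀, hA₁⟩ := exists_mem_inter_of_edgesAt h₀ h₁
  refine sum_verts_eq_of_forall_ne (heven A) hM (mem_edgesAt.1 h₁).2 hA₁ fun e he hAe hee₁ => ?_
  by_cases hve : v ∈ S.verts e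
  · obtain rfl | rfl := eq_or_eq_of_mem_edgesAt h₀ h₁ hne hA₀ hA₁
      (mem_edgesAt.2 ⟨mem_verts.1 hve, he⟩) hAe
    exacts [hg₀, absurd rfl hee₁]
  refine hg e he fun x hx => (Finset.mem_insert.1 ((hs x).2 ?_)).resolve_left
    fun h => hve (h ▸ hx)
  refine S.le_of_forall_edge_le {A} v (by simpa using (mem_edgesAt.1 h₀).1 hA₀)
    (fun e' hAe' he' hve' w hw => (hs w).1 ?_) x (by simpa using mem_verts.1 hx hAe)
  obtain rfl | rfl := eq_or_eq_of_mem_edgesAt h₀ h₁ hne hA₀ hA₁ (mem_edgesAt.2 ⟨hve', he'⟩)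
    (Finset.singleton_subset_iff.1 hAe')
  exacts [hs₀ (mem_verts.2 hw), hs₁ (mem_verts.2 hw)]

lemma exists_cochain {M : Finset (Finset Φ)} (hM : ∀ e ∈ M, ∃ v, e ∈ S.edgesAt v)
    (heven : ∀ F, Even #{e ∈ M | F ∈ e}) (s : Finset V)
    (hs : ∀ v ∈ s, ∀ w, S.height w ≤ S.height v → w ∈ s) :
    ∃ f : V → ZMod 2, ∀ e, #e = 2 → S.verts e ⊆ s →
      ∑ x ∈ S.verts e, f x = if e ∈ M then 1 else 0 := by
  have hM2 : ∀ e ∈ M, #e = 2 := fun e he => (hM e he).elim fun v hv => (mem_edgesAt.1 hv).2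
  induction s using Finset.induction_on_max_value S.height with
  | empty =>
    refine ⟨0, fun e _ hes => ?_⟩
    have heM : e ∉ M := fun he => (hM e he).elim fun v hv => by
      simpa using hes (mem_verts.2 (mem_edgesAt.1 hv).1)
    simp [heM]
  | insert v s hvs hmax ih =>
  have hle : ∀ x, x ∈ insert v s ↔ S.height x ≤ S.height v := fun x =>
    ⟨fun hx => (Finset.mem_insert.1 hx).elim (fun h => h ▸ le_rfl) (hmax x), hs v (by simp) x⟩
  obtain ⟨f, hf⟩ := ih fun x hx y hyx => (Finset.mem_insert.1
    (hs x (mem_insert_of_mem hx) y hyx)).resolve_left fun hyv =>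
      hvs (S.height_injective (le_antisymm (hmax x hx) (hyv ▸ hyx)) ▸ hx)
  have hupdate (c : ZMod 2) (t : Finset V) (ht : v ∉ t) :
      ∑ x ∈ t, Function.update f v c x = ∑ x ∈ t, f x :=
    sum_congr rfl fun x hx => Function.update_of_ne (ne_of_mem_of_not_mem hx ht) ..
  by_cases hlow : ∃ e₀ ∈ S.edgesAt v, S.verts e₀ ⊆ insert v s
  · obtain ⟨e₀, h₀, hs₀⟩ := hlow
    have hv₀ : v ∈ S.verts e₀ := mem_verts.2 (mem_edgesAt.1 h₀).1
    refine ⟨Function.update f v ((if e₀ ∈ M then 1 else 0) - ∑ x ∈ (S.verts e₀).erase v, f x),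
      fun e he hes => ?_⟩
    by_cases hv : v ∈ S.verts e
    · refine sum_verts_eq_of_lower_edges heven hM2 hle (fun e' he' hs' => ?_) h₀ hs₀ ?_
        (mem_edgesAt.2 ⟨mem_verts.1 hv, he⟩) hes
      · rw [hupdate _ _ fun h => hvs (hs' h), hf e' he' hs']
      · rw [← add_sum_erase _ _ hv₀, hupdate _ _ (notMem_erase v _), Function.update_self,
          sub_add_cancel]
    · rw [hupdate _ _ hv, hf e he ((Finset.subset_insert_iff_of_notMem hv).1 hes)]
  · push Not at hlow
    refine ⟨f, fun e he hes => hf e he ((Finset.subset_insert_iff_of_notMem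
      fun hv => hlow e (mem_edgesAt.2 ⟨mem_verts.1 hv, he⟩) hes).1 hes)⟩

end Cochains

/-- A simple sphere has no mod 2 cohomology in degree one. -/
lemma exists_cutEdges_eq {M : Finset (Finset Φ)} (hM : ∀ e ∈ M, ∃ v, e ∈ S.edgesAt v)
    (heven : ∀ F, Even #{e ∈ M | F ∈ e}) : ∃ X, S.cutEdges X = M := by
  obtain ⟨f, hf⟩ := exists_cochain hM heven Finset.univ (by simp)
  refine ⟨({v | f v = 1} : Finset V), ?_⟩
  ext e
  by_cases he : #e = 2
  · have hsum : ∑ x ∈ S.verts e, f x = #(S.verts e ∩ ({v | f v = 1} : Finset V)) := by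
      rw [← filter_univ_mem (S.verts e), Finset.inter_filter, ← sum_boole]
      refine sum_congr (by simp) fun x _ => ?_
      generalize f x = a
      fin_cases a <;> rfl
    rw [mem_cutEdges_iff_odd he, ← Nat.not_even_iff_odd, ← ZMod.natCast_eq_zero_iff_even, ← hsum,
      hf e he (Finset.subset_univ _)]
    simp
  · exact iff_of_false (fun h => he (mem_cutEdges.1 h).1)
      fun h => (hM e h).elim fun v hv => he (mem_edgesAt.1 hv).2

lemma sum_card_filter_mem_cutEdges (X : Finset V) :
    ∑ F ∈ S.cutFacets X, #{e ∈ S.cutEdges X | F ∈ e} = 2 * #(S.cutEdges X) := by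
  have := sum_card_bipartiteAbove_eq_sum_card_bipartiteBelow (s := S.cutFacets X)
    (t := S.cutEdges X) (fun F e => F ∈ e)
  refine this.trans ((sum_congr rfl fun e he => ?_).trans (sum_const_nat fun _ _ => rfl) |>.trans
    (mul_comm _ _))
  rw [bipartiteBelow, filter_mem_eq_inter, Finset.inter_eq_right.2 (subset_cutFacets he),
    (mem_cutEdges.1 he).1]

/-- An edge of the coboundary on `F` is determined by the other facet containing it. -/
lemma card_filter_mem_cutEdges_lt (hF : F ∈ S.cutFacets X) :
    #{e ∈ S.cutEdges X | F ∈ e} < #(S.cutFacets X) := by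
  rw [← card_erase_add_one hF, Nat.lt_succ_iff]
  have hmaps : ∀ e ∈ ({e ∈ S.cutEdges X | F ∈ e} : Finset (Finset Φ)),
      e.erase F ∈ powersetCard 1 ((S.cutFacets X).erase F) := fun e he => by
    obtain ⟨he, hFe⟩ := mem_filter.1 he
    refine mem_powersetCard.2 ⟨erase_subset_erase F (subset_cutFacets he), ?_⟩
    rw [card_erase_of_mem hFe, (mem_cutEdges.1 he).1]
  have hinj : Set.InjOn (fun e : Finset Φ => e.erase F)
      ({e ∈ S.cutEdges X | F ∈ e} : Finset (Finset Φ)) :=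
    (erase_injOn' F).mono fun e he => (mem_filter.1 he).2
  simpa using card_le_card_of_injOn _ hmaps hinj

lemma two_le_card_filter_mem_cutEdges (hF : F ∈ S.cutFacets X) :
    2 ≤ #{e ∈ S.cutEdges X | F ∈ e} := by
  obtain ⟨e, he, hFe⟩ := mem_cutFacets.1 hF
  obtain ⟨m, hm⟩ := even_card_filter_mem_cutEdges (S := S) (X := X) F
  have : 0 < #{e ∈ S.cutEdges X | F ∈ e} := card_pos.2 ⟨e, mem_filter.2 ⟨he, hFe⟩⟩
  omega

lemma card_cutFacets_le (X : Finset V) : #(S.cutFacets X) ≤ #(S.cutEdges X) := by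
  have := card_nsmul_le_sum (S.cutFacets X) _ 2 fun F hF => two_le_card_filter_mem_cutEdges hF
  rw [sum_card_filter_mem_cutEdges, smul_eq_mul] at this
  omega

variable (S) in
/-- A proper nonempty set of vertices whose coboundary has at most four edges, that is, one side
of a 3-belt or a 4-belt. -/
structure IsSmallCut (X : Finset V) : Prop where
  nonempty : X.Nonempty
  compl_nonempty : Xᶜ.Nonempty
  card_le : #(S.cutEdges X) ≤ 4

namespace IsSmallCut

lemma card_filter_mem_cutEdges (hX : S.IsSmallCut X) (hF : F ∈ S.cutFacets X) :
    #{e ∈ S.cutEdges X | F ∈ e} = 2 := by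
  have hlt := card_filter_mem_cutEdges_lt hF
  have h2 := two_le_card_filter_mem_cutEdges hF
  obtain ⟨m, hm⟩ := even_card_filter_mem_cutEdges (S := S) (X := X) F
  have := card_cutFacets_le (S := S) X
  have := hX.card_le
  omega

lemma card_cutFacets (hX : S.IsSmallCut X) : #(S.cutFacets X) = #(S.cutEdges X) := by
  have := sum_card_filter_mem_cutEdges (S := S) X
  rw [sum_const_nat fun F hF => hX.card_filter_mem_cutEdges hF] at this
  omega

lemma three_le_card_cutEdges (hX : S.IsSmallCut X) : 3 ≤ #(S.cutEdges X) := by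
  obtain ⟨v, hv⟩ := hX.nonempty
  obtain ⟨w, hw⟩ := hX.compl_nonempty
  obtain ⟨e, he, -⟩ := exists_cutEdge_superset (S := S) (σ := ∅) (by simp) hv (by simp)
    (mem_compl.1 hw)
  obtain ⟨F, hF⟩ := card_pos.1 (show 0 < #e from (mem_cutEdges.1 he).1 ▸ two_pos)
  have h2 := two_le_card_filter_mem_cutEdges (subset_cutFacets he hF)
  have hlt := card_filter_mem_cutEdges_lt (subset_cutFacets he hF)
  have := hX.card_cutFacets
  omega

lemma exists_cutEdge_of_subset_cutFacets (hX : S.IsSmallCut X) (hv : S.facetsAt v ⊆ S.cutFacets X)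
    (hF : F ∈ S.facetsAt v) : ∃ e ∈ S.cutEdges X ∩ S.edgesAt v, F ∈ e := by
  by_contra! hcon
  have hsmall : #(S.cutFacets X \ S.facetsAt v) ≤ 1 := by
    rw [card_sdiff_of_subset hv, S.card_facetsAt]
    have := hX.card_cutFacets
    have := hX.card_le
    omega
  have hout : ∀ e ∈ ({e ∈ S.cutEdges X | F ∈ e} : Finset (Finset Φ)),
      ∃ Z ∈ S.cutFacets X \ S.facetsAt v, e = {F, Z} := fun e he => by
    obtain ⟨he, hFe⟩ := mem_filter.1 he
    have hnot : ¬e ⊆ S.facetsAt v := fun h =>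
      hcon e (Finset.mem_inter.2 ⟨he, mem_edgesAt.2 ⟨h, (mem_cutEdges.1 he).1⟩⟩) hFe
    obtain ⟨Z, hZe, hZ⟩ := Finset.not_subset.1 hnot
    refine ⟨Z, mem_sdiff.2 ⟨subset_cutFacets he hZe, hZ⟩,
      (eq_of_subset_of_card_le ?_ ?_).symm⟩
    · simp [Finset.insert_subset_iff, hFe, hZe]
    · rw [card_pair (ne_of_mem_of_not_mem hF hZ), (mem_cutEdges.1 he).1]
  have hone : #{e ∈ S.cutEdges X | F ∈ e} ≤ 1 := by
    refine card_le_one.2 fun e he e' he' => ?_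
    obtain ⟨Z, hZ, rfl⟩ := hout e he
    obtain ⟨Z', hZ', rfl⟩ := hout e' he'
    rw [card_le_one.1 hsmall Z hZ Z' hZ']
  rw [hX.card_filter_mem_cutEdges (hv hF)] at hone
  omega

lemma two_le_card_cutEdges_inter_edgesAt (hX : S.IsSmallCut X)
    (hv : S.facetsAt v ⊆ S.cutFacets X) : 2 ≤ #(S.cutEdges X ∩ S.edgesAt v) := by
  have hcover : S.facetsAt v ⊆ (S.cutEdges X ∩ S.edgesAt v).biUnion id := fun F hF => by
    simpa using hX.exists_cutEdge_of_subset_cutFacets hv hF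
  have hcard := (Finset.card_le_card hcover).trans (card_biUnion_le_card_mul _ _ 2 fun e he =>
    (mem_edgesAt.1 (Finset.mem_inter.1 he).2).2.le)
  rw [S.card_facetsAt] at hcard
  omega

end IsSmallCut

lemma sum_card_cutEdges_inter_edgesAt (X : Finset V) :
    ∑ v ∈ X, #(S.cutEdges X ∩ S.edgesAt v) = #(S.cutEdges X) := by
  simp_rw [← filter_mem_eq_inter]
  refine (sum_card_bipartiteAbove_eq_sum_card_bipartiteBelow _).trans
    ((sum_congr rfl fun e he => ?_).trans (card_eq_sum_ones _).symm)
  rw [← (mem_cutEdges.1 he).2, bipartiteBelow, Finset.inter_comm, ← filter_mem_eq_inter]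
  refine congrArg card (filter_congr fun v _ => ?_)
  rw [mem_edgesAt, mem_verts, and_iff_left (mem_cutEdges.1 he).1]

variable (S) in
/-- The number of incidences between vertices in `X` and facets cut by `X`. If the side `X` of a
`k`-belt in a fullerene contains `p` pentagons, it equals `3 * k + p - 6` by Euler's formula. -/
def cutIncidences (X : Finset V) : ℕ := ∑ F ∈ S.cutFacets X, #(S.verts {F} ∩ X)

lemma cutIncidences_eq (X : Finset V) :
    S.cutIncidences X = ∑ v ∈ X, #(S.facetsAt v ∩ S.cutFacets X) :=
  sum_card_verts_inter _ _

lemma cutFacets_erase_subset (hv : v ∈ X) :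
    S.cutFacets (X.erase v) ⊆ S.cutFacets X ∪ S.facetsAt v := fun F hF => by
  obtain ⟨e, he, hFe⟩ := mem_cutFacets.1 hF
  obtain he | he := Finset.mem_union.1 (cutEdges_erase_subset hv he)
  · exact mem_union_left _ (subset_cutFacets he hFe)
  · exact mem_union_right _ ((mem_edgesAt.1 he).1 hFe)

lemma subset_cutFacets_of_two_le (h : 2 ≤ #(S.cutEdges X ∩ S.edgesAt v)) :
    S.facetsAt v ⊆ S.cutFacets X := by
  obtain ⟨e, he, e', he', hne⟩ := one_lt_card.1 h
  rw [Finset.mem_inter] at he he'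
  have hsub := Finset.union_subset (mem_edgesAt.1 he.2).1 (mem_edgesAt.1 he'.2).1
  have hlt : #e < #(e ∪ e') := card_lt_card (left_lt_sup.2 fun h => hne
    (eq_of_subset_of_card_le h (by rw [(mem_cutEdges.1 he.1).1, (mem_cutEdges.1 he'.1).1])).symm)
  rw [(mem_cutEdges.1 he.1).1] at hlt
  rw [← eq_of_subset_of_card_le hsub (by rw [S.card_facetsAt]; omega)]
  exact Finset.union_subset (subset_cutFacets he.1) (subset_cutFacets he'.1)

lemma IsSmallCut.erase (hX : S.IsSmallCut X) (hv : v ∈ X) (hne : (X.erase v).Nonempty)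
    (h : 2 ≤ #(S.cutEdges X ∩ S.edgesAt v)) : S.IsSmallCut (X.erase v) ∧
      #(S.cutEdges X) = 4 ∧ #(S.cutEdges (X.erase v)) = 3 := by
  have hcard := card_cutEdges_erase (S := S) hv
  have := hX.card_le
  have hsmall : S.IsSmallCut (X.erase v) :=
    ⟨hne, hX.compl_nonempty.mono (compl_subset_compl.2 (erase_subset v X)), by omega⟩
  have := hsmall.three_le_card_cutEdges
  exact ⟨hsmall, by omega, by omega⟩

lemma cutIncidences_erase_add_three_le (hv : v ∈ X) (h : 2 ≤ #(S.cutEdges X ∩ S.edgesAt v)) :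
    S.cutIncidences (X.erase v) + 3 ≤ S.cutIncidences X := by
  have hall := subset_cutFacets_of_two_le h
  rw [cutIncidences_eq, cutIncidences_eq, ← sum_erase_add _ _ hv, Finset.inter_eq_left.2 hall,
    S.card_facetsAt]
  refine Nat.add_le_add_right (sum_le_sum fun w _ => Finset.card_le_card
    (inter_subset_inter_left ((cutFacets_erase_subset hv).trans ?_))) 3
  exact Finset.union_subset subset_rfl hall

section SingleCutEdges

variable (hX : S.IsSmallCut X) (hp : ∀ v ∈ X, #(S.cutEdges X ∩ S.edgesAt v) ≤ 1)
include hX hp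

namespace IsSmallCut

lemma card_inter_cutFacets_le_two (hv : v ∈ X) : #(S.facetsAt v ∩ S.cutFacets X) ≤ 2 := by
  by_contra! hlt
  have hsub := eq_of_subset_of_card_le (inter_subset_left (s₂ := S.cutFacets X))
    ((S.card_facetsAt v).trans_le hlt)
  have := hX.two_le_card_cutEdges_inter_edgesAt (Finset.inter_eq_left.1 hsub)
  have := hp v hv
  omega

lemma inter_cutFacets_eq (hv : v ∈ X) (he : e ∈ S.cutEdges X) (hev : e ∈ S.edgesAt v) :
    S.facetsAt v ∩ S.cutFacets X = e :=
  (eq_of_subset_of_card_le (Finset.subset_inter (mem_edgesAt.1 hev).1 (subset_cutFacets he))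
    ((hX.card_inter_cutFacets_le_two hp hv).trans (mem_edgesAt.1 hev).2.ge)).symm

lemma exists_two_cutEdges (hF : F ∈ S.cutFacets X) : ∃ v₁ ∈ X, ∃ v₂ ∈ X, v₁ ≠ v₂ ∧
    ∃ e₁ ∈ S.cutEdges X ∩ S.edgesAt v₁, ∃ e₂ ∈ S.cutEdges X ∩ S.edgesAt v₂,
      F ∈ e₁ ∧ F ∈ e₂ := by
  obtain ⟨e₁, e₂, hne, heq⟩ := card_eq_two.1 (hX.card_filter_mem_cutEdges hF)
  obtain ⟨he₁, hF₁⟩ := mem_filter.1 (heq ▸ mem_insert_self e₁ {e₂})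
  obtain ⟨he₂, hF₂⟩ := mem_filter.1 (heq ▸ mem_insert_of_mem (mem_singleton_self e₂))
  obtain ⟨v₁, hv₁, hev₁⟩ := exists_mem_edgesAt_of_mem_cutEdges he₁
  obtain ⟨v₂, hv₂, hev₂⟩ := exists_mem_edgesAt_of_mem_cutEdges he₂
  have hmem₁ := Finset.mem_inter.2 ⟨he₁, hev₁⟩
  refine ⟨v₁, hv₁, v₂, hv₂, ?_, e₁, hmem₁, e₂, Finset.mem_inter.2 ⟨he₂, hev₂⟩, hF₁, hF₂⟩
  rintro rfl
  exact hne (card_le_one.1 (hp v₁ hv₁) e₁ hmem₁ e₂ (Finset.mem_inter.2 ⟨he₂, hev₂⟩))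

lemma exists_insert_eq_facetsAt (hv : v ∈ X) (he : e ∈ S.cutEdges X ∩ S.edgesAt v) :
    ∃ H ∉ S.cutFacets X, insert H e = S.facetsAt v := by
  obtain ⟨he, hev⟩ := Finset.mem_inter.1 he
  have hinter := hX.inter_cutFacets_eq hp hv he hev
  obtain ⟨H, hHe, hH⟩ := (exists_eq_insert_iff (t := S.facetsAt v)).2
    ⟨(mem_edgesAt.1 hev).1, by rw [(mem_edgesAt.1 hev).2, S.card_facetsAt]⟩
  exact ⟨H, fun hcut => hHe (hinter ▸ Finset.mem_inter.2 ⟨hH ▸ mem_insert_self H e, hcut⟩), hH⟩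

lemma exists_pair_of_card_le_two (hF : F ∈ S.cutFacets X) (h2 : #(S.verts {F} ∩ X) ≤ 2) :
    ∃ v₁ ∈ X, ∃ v₂ ∈ X, v₁ ≠ v₂ ∧ S.verts {F} ∩ X = {v₁, v₂} ∧
      ∃ e₁ ∈ S.cutEdges X ∩ S.edgesAt v₁, ∃ e₂ ∈ S.cutEdges X ∩ S.edgesAt v₂, F ∈ e₁ ∧ F ∈ e₂ ∧
        ∃ H ∉ S.cutFacets X, insert H e₁ = S.facetsAt v₁ ∧ insert H e₂ = S.facetsAt v₂ := by
  obtain ⟨v₁, hv₁, v₂, hv₂, hne, e₁, he₁, e₂, he₂, hF₁, hF₂⟩ := hX.exists_two_cutEdges hp hF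
  have hmem {v : V} {e : Finset Φ} (hv : v ∈ X) (he : e ∈ S.cutEdges X ∩ S.edgesAt v)
      (hFe : F ∈ e) : v ∈ S.verts {F} ∩ X :=
    Finset.mem_inter.2 ⟨mem_verts_singleton.2 ((mem_edgesAt.1 (Finset.mem_inter.1 he).2).1 hFe), hv⟩
  have hpair : S.verts {F} ∩ X = {v₁, v₂} := by
    refine (eq_of_subset_of_card_le ?_ (h2.trans (card_pair hne).ge)).symm
    rw [Finset.insert_subset_iff, Finset.singleton_subset_iff]
    exact ⟨hmem hv₁ he₁ hF₁, hmem hv₂ he₂ hF₂⟩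
  obtain ⟨H, hH, hHv₁⟩ := hX.exists_insert_eq_facetsAt hp hv₁ he₁
  obtain ⟨H', -, hHv₂⟩ := hX.exists_insert_eq_facetsAt hp hv₂ he₂
  have hFH : {F, H} ∈ S.edgesAt v₁ := mem_edgesAt.2 ⟨by
    rw [← hHv₁]; simp [Finset.insert_subset_iff, hF₁], card_pair fun h => hH (h ▸ hF)⟩
  obtain ⟨u, hu, hverts⟩ := exists_verts_eq_pair hFH
  have huFH : {F, H} ⊆ S.facetsAt u := mem_verts.1 (hverts ▸ by simp)
  have huX : u ∈ X := verts_subset_of_notMem_cutFacets hH (hHv₁ ▸ mem_insert_self H e₁) hv₁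
    (mem_verts_singleton.2 (huFH (by simp)))
  have huv₂ : u = v₂ := by
    have : u ∈ ({v₁, v₂} : Finset V) := hpair ▸
      Finset.mem_inter.2 ⟨mem_verts_singleton.2 (huFH (by simp)), huX⟩
    simpa [hu] using this
  have hHH' : H = H' := by
    have : H ∈ insert H' e₂ := by rw [hHv₂, ← huv₂]; exact huFH (by simp)
    exact (Finset.mem_insert.1 this).resolve_right fun h =>
      hH (subset_cutFacets (Finset.mem_inter.1 he₂).1 h)
  exact ⟨v₁, hv₁, v₂, hv₂, hne, hpair, e₁, he₁, e₂, he₂, hF₁, hF₂, H, hH, hHv₁, hHH' ▸ hHv₂⟩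

end IsSmallCut

section Pair

variable {v₁ v₂ : V} {e₁ e₂ : Finset Φ} {H : Φ} (hv₁ : v₁ ∈ X) (hv₂ : v₂ ∈ X) (hne : v₁ ≠ v₂)
  (he₁ : e₁ ∈ S.cutEdges X ∩ S.edgesAt v₁) (he₂ : e₂ ∈ S.cutEdges X ∩ S.edgesAt v₂)
  (hH : H ∉ S.cutFacets X) (hHv₁ : insert H e₁ = S.facetsAt v₁)
  (hHv₂ : insert H e₂ = S.facetsAt v₂)
include hv₁ hv₂ hne he₁ he₂ hH hHv₁ hHv₂

omit hX hp in
lemma card_cutEdges_erase_pair_le (hF₁ : F ∈ e₁) (hF₂ : F ∈ e₂) :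
    #(S.cutEdges ((X.erase v₁).erase v₂)) ≤ #(S.cutEdges X) := by
  have hcard₁ := card_cutEdges_erase (S := S) hv₁
  have hcard₂ := card_cutEdges_erase (S := S) (mem_erase.2 ⟨hne.symm, hv₂⟩)
  have hpos : 0 < #(S.cutEdges X ∩ S.edgesAt v₁) := card_pos.2 ⟨e₁, he₁⟩
  suffices 2 ≤ #(S.cutEdges (X.erase v₁) ∩ S.edgesAt v₂) by omega
  have hHe {e : Finset Φ} {v : V} (he : e ∈ S.cutEdges X ∩ S.edgesAt v) : H ∉ e := fun h =>
    hH (subset_cutFacets (Finset.mem_inter.1 he).1 h)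
  have hFH {e : Finset Φ} {v : V} (hFe : F ∈ e) (hHe : H ∉ e) (hv : insert H e = S.facetsAt v) :
      {F, H} ∈ S.edgesAt v := mem_edgesAt.2
    ⟨by rw [← hv]; simp [Finset.insert_subset_iff, hFe], card_pair (ne_of_mem_of_not_mem hFe hHe)⟩
  refine one_lt_card.2 ⟨e₂, ?_, {F, H}, ?_, fun h => hHe he₂ (h ▸ by simp)⟩ <;>
    rw [Finset.mem_inter, cutEdges_erase hv₁, Finset.mem_symmDiff]
  · refine ⟨Or.inl ⟨(Finset.mem_inter.1 he₂).1, fun h => ?_⟩, (Finset.mem_inter.1 he₂).2⟩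
    have hv {v : V} (hvX : v ∈ X) (hv : e₂ ∈ S.edgesAt v) : v ∈ S.verts e₂ ∩ X :=
      Finset.mem_inter.2 ⟨mem_verts.2 (mem_edgesAt.1 hv).1, hvX⟩
    exact hne (card_le_one.1 (mem_cutEdges.1 (Finset.mem_inter.1 he₂).1).2.le
      v₁ (hv hv₁ h) v₂ (hv hv₂ (Finset.mem_inter.1 he₂).2))
  · exact ⟨Or.inr ⟨hFH hF₁ (hHe he₁) hHv₁, fun h => hH (subset_cutFacets h (by simp))⟩,
      hFH hF₂ (hHe he₂) hHv₂⟩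

omit hX hp in
lemma cutFacets_erase_pair_subset (hF : F ∈ S.cutFacets X)
    (hFX' : S.verts {F} ∩ (X.erase v₁).erase v₂ = ∅) :
    S.cutFacets ((X.erase v₁).erase v₂) ⊆ insert H ((S.cutFacets X).erase F) := by
  have hsub {v : V} {e : Finset Φ} (hv : insert H e = S.facetsAt v)
      (he : e ∈ S.cutEdges X ∩ S.edgesAt v) : S.facetsAt v ⊆ insert H (S.cutFacets X) :=
    hv ▸ insert_subset_insert H (subset_cutFacets (Finset.mem_inter.1 he).1)
  have hcut : S.cutFacets ((X.erase v₁).erase v₂) ⊆ insert H (S.cutFacets X) :=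
    (cutFacets_erase_subset (mem_erase.2 ⟨hne.symm, hv₂⟩)).trans (Finset.union_subset
      ((cutFacets_erase_subset hv₁).trans
        (Finset.union_subset (Finset.subset_insert _ _) (hsub hHv₁ he₁))) (hsub hHv₂ he₂))
  rw [← erase_insert_of_ne (ne_of_mem_of_not_mem hF hH).symm, subset_erase]
  refine ⟨hcut, fun h => ?_⟩
  obtain ⟨e, he, hFe⟩ := mem_cutFacets.1 h
  obtain ⟨v, hv, hev⟩ := exists_mem_edgesAt_of_mem_cutEdges he
  exact notMem_empty v (hFX' ▸ Finset.mem_inter.2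
    ⟨mem_verts_singleton.2 ((mem_edgesAt.1 hev).1 hFe), hv⟩)

lemma cutIncidences_erase_pair_le (hpair : S.verts {F} ∩ X = {v₁, v₂}) (hF : F ∈ S.cutFacets X)
    (h6 : #(S.verts {H}) ≤ 6) :
    S.cutIncidences ((X.erase v₁).erase v₂) ≤ S.cutIncidences X := by
  set X' := (X.erase v₁).erase v₂ with hX'
  have hFX' : S.verts {F} ∩ X' = ∅ := by
    rw [hX', inter_erase, inter_erase, hpair]
    ext x
    simp only [mem_erase, Finset.mem_insert, Finset.mem_singleton, Finset.notMem_empty, iff_false]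
    tauto
  have hcut := cutFacets_erase_pair_subset hv₁ hv₂ hne he₁ he₂ hH hHv₁ hHv₂ hF hFX'
  have hHX' : #(S.verts {H} ∩ X') ≤ 4 := by
    have hmem {v : V} {e : Finset Φ} (hv : insert H e = S.facetsAt v) : v ∈ S.verts {H} :=
      mem_verts_singleton.2 (hv ▸ mem_insert_self H e)
    have hle := Finset.card_le_card (show S.verts {H} ∩ X' ⊆ ((S.verts {H}).erase v₁).erase v₂ by
      rw [hX', inter_erase, inter_erase]
      exact erase_subset_erase _ (erase_subset_erase _ inter_subset_left))
    rw [card_erase_of_mem (mem_erase.2 ⟨hne.symm, hmem hHv₂⟩), card_erase_of_mem (hmem hHv₁)] at hle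
    omega
  have hc {v : V} {e : Finset Φ} (hv : v ∈ X) (he : e ∈ S.cutEdges X ∩ S.edgesAt v) :
      #(S.facetsAt v ∩ S.cutFacets X) = 2 := by
    rw [hX.inter_cutFacets_eq hp hv (Finset.mem_inter.1 he).1 (Finset.mem_inter.1 he).2]
    exact (mem_edgesAt.1 (Finset.mem_inter.1 he).2).2
  calc S.cutIncidences X' ≤ ∑ G ∈ insert H ((S.cutFacets X).erase F), #(S.verts {G} ∩ X') :=
        sum_le_sum_of_subset hcut
    _ ≤ 4 + ∑ G ∈ (S.cutFacets X).erase F, #(S.verts {G} ∩ X') := by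
        rw [sum_insert fun h => hH (mem_erase.1 h).2]; gcongr
    _ = 4 + ∑ v ∈ X', #(S.facetsAt v ∩ S.cutFacets X) := by
        rw [← sum_card_verts_inter, ← add_sum_erase _ _ hF, hFX', Finset.card_empty, zero_add]
    _ = S.cutIncidences X := by
        rw [cutIncidences_eq, ← add_sum_erase X _ hv₁,
          ← add_sum_erase _ _ (mem_erase.2 ⟨hne.symm, hv₂⟩), hc hv₁ he₁, hc hv₂ he₂, ← add_assoc]

omit hX hp hv₂ hne he₁ he₂ hHv₂ in
lemma three_le_card_erase_pair (h5 : 5 ≤ #(S.verts {H})) : 3 ≤ #((X.erase v₁).erase v₂) := by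
  have hsub := verts_subset_of_notMem_cutFacets hH (hHv₁ ▸ mem_insert_self H e₁) hv₁
  have := Finset.card_le_card hsub
  have := pred_card_le_card_erase (s := X) (a := v₁)
  have := pred_card_le_card_erase (s := X.erase v₁) (a := v₂)
  omega

end Pair
end SingleCutEdges

variable (S) in
/-- The vertices of `X` that lie on no facet cut by `X`: what is left of one side of a belt after
its outermost layer has been removed. -/
def core (X : Finset V) : Finset V := {v ∈ X | Disjoint (S.facetsAt v) (S.cutFacets X)}

variable (S) in
/-- The vertices of `X` with a single cut facet; they are joined to the rest of `X` by the edge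
on their two uncut facets. -/
def outerVerts (X : Finset V) : Finset V := {v ∈ X | #(S.facetsAt v ∩ S.cutFacets X) = 1}

lemma mem_core : v ∈ S.core X ↔ v ∈ X ∧ #(S.facetsAt v ∩ S.cutFacets X) = 0 := by
  rw [core, mem_filter, Finset.disjoint_iff_inter_eq_empty, card_eq_zero]

lemma mem_outerVerts : v ∈ S.outerVerts X ↔ v ∈ X ∧ #(S.facetsAt v ∩ S.cutFacets X) = 1 := by
  simp [outerVerts]

lemma core_subset : S.core X ⊆ X := filter_subset _ _

lemma sdiff_mem_edgesAt (hv : v ∈ S.outerVerts X) :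
    S.facetsAt v \ S.cutFacets X ∈ S.edgesAt v := by
  have := card_sdiff_add_card_inter (S.facetsAt v) (S.cutFacets X)
  rw [(mem_outerVerts.1 hv).2, S.card_facetsAt] at this
  exact mem_edgesAt.2 ⟨Finset.sdiff_subset, by omega⟩

lemma mem_core_or_mem_outerVerts (hvX : v ∈ X) (he : e ∈ S.edgesAt v)
    (hdisj : Disjoint e (S.cutFacets X)) :
    v ∈ S.core X ∨ v ∈ S.outerVerts X ∧ S.facetsAt v \ S.cutFacets X = e := by
  have hsub : e ⊆ S.facetsAt v \ S.cutFacets X :=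
    subset_sdiff.2 ⟨(mem_edgesAt.1 he).1, hdisj⟩
  have hcard := card_sdiff_add_card_inter (S.facetsAt v) (S.cutFacets X)
  have hle := Finset.card_le_card hsub
  rw [S.card_facetsAt] at hcard
  rw [(mem_edgesAt.1 he).2] at hle
  obtain h | h : #(S.facetsAt v ∩ S.cutFacets X) = 0 ∨ #(S.facetsAt v ∩ S.cutFacets X) = 1 := by
    omega
  · exact Or.inl (mem_core.2 ⟨hvX, h⟩)
  · exact Or.inr ⟨mem_outerVerts.2 ⟨hvX, h⟩, (eq_of_subset_of_card_le hsub
      (by rw [(mem_edgesAt.1 he).2]; omega)).symm⟩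

lemma exists_outerVerts_of_mem_cutEdges_core (he : e ∈ S.cutEdges (S.core X)) :
    ∃ v ∈ S.outerVerts X, S.facetsAt v \ S.cutFacets X = e := by
  obtain ⟨x, hx, hex⟩ := exists_mem_edgesAt_of_mem_cutEdges he
  obtain ⟨y, hyx, hverts⟩ := exists_verts_eq_pair hex
  have hy : y ∉ S.core X := (mem_cutEdges_iff_of_verts_eq hex hyx.symm hverts hx).1 he
  have hdisj : Disjoint e (S.cutFacets X) :=
    (mem_filter.1 hx).2.mono_left (mem_edgesAt.1 hex).1
  have hey : e ⊆ S.facetsAt y := mem_verts.1 (hverts ▸ by simp)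
  obtain ⟨F, hF⟩ := card_pos.1 (show 0 < #e from (mem_cutEdges.1 he).1 ▸ two_pos)
  have hyX : y ∈ X := verts_subset_of_notMem_cutFacets (Finset.disjoint_left.1 hdisj hF)
    ((mem_edgesAt.1 hex).1 hF) (core_subset hx) (mem_verts_singleton.2 (hey hF))
  exact ⟨y, (mem_core_or_mem_outerVerts hyX (mem_edgesAt.2 ⟨hey, (mem_cutEdges.1 he).1⟩)
    hdisj).resolve_left hy⟩

lemma sdiff_mem_cutEdges_core_or (hv : v ∈ S.outerVerts X) :
    S.facetsAt v \ S.cutFacets X ∈ S.cutEdges (S.core X) ∨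
      ∃ w ∈ S.outerVerts X, w ≠ v ∧
        S.facetsAt w \ S.cutFacets X = S.facetsAt v \ S.cutFacets X := by
  have he := sdiff_mem_edgesAt hv
  obtain ⟨w, hwv, hverts⟩ := exists_verts_eq_pair he
  have hew : S.facetsAt v \ S.cutFacets X ⊆ S.facetsAt w := mem_verts.1 (hverts ▸ by simp)
  obtain ⟨F, hF⟩ := card_pos.1 (show 0 < #_ from (mem_edgesAt.1 he).2 ▸ two_pos)
  have hwX : w ∈ X := verts_subset_of_notMem_cutFacets (mem_sdiff.1 hF).2
    ((mem_edgesAt.1 he).1 hF) (mem_outerVerts.1 hv).1 (mem_verts_singleton.2 (hew hF))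
  obtain hw | hw := mem_core_or_mem_outerVerts hwX (mem_edgesAt.2 ⟨hew, (mem_edgesAt.1 he).2⟩)
    Finset.sdiff_disjoint
  · left
    refine (mem_cutEdges_iff_of_verts_eq (mem_edgesAt.2 ⟨hew, (mem_edgesAt.1 he).2⟩) hwv
      (hverts.trans (Finset.pair_comm v w)) hw).2 fun h => ?_
    have := (mem_core.1 h).2.symm.trans (mem_outerVerts.1 hv).2
    omega
  · exact Or.inr ⟨w, hw.1, hwv, hw.2⟩

lemma cutEdges_core_subset_image :
    S.cutEdges (S.core X) ⊆ (S.outerVerts X).image fun v => S.facetsAt v \ S.cutFacets X :=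
  fun _ he => mem_image.2 (exists_outerVerts_of_mem_cutEdges_core he)

/-- If two outer vertices were joined by an edge, too few edges would leave the core. -/
lemma injOn_sdiff_cutFacets (hle : #(S.outerVerts X) ≤ 4) (hcore : S.IsSmallCut (S.core X)) :
    Set.InjOn (fun v => S.facetsAt v \ S.cutFacets X) (S.outerVerts X) := by
  intro v hv w hw heq
  by_contra hvw
  have hnot : S.facetsAt v \ S.cutFacets X ∉ S.cutEdges (S.core X) := fun h => by
    obtain ⟨u, hu, heu⟩ := exists_mem_edgesAt_of_mem_cutEdges h
    have hpair : {v, w} ⊆ S.verts (S.facetsAt v \ S.cutFacets X) := by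
      rw [Finset.insert_subset_iff, Finset.singleton_subset_iff, mem_verts, mem_verts]
      exact ⟨Finset.sdiff_subset, heq.trans_subset Finset.sdiff_subset⟩
    have hmem : u ∈ ({v, w} : Finset V) :=
      eq_of_subset_of_card_le hpair (by rw [card_pair hvw, card_verts heu]) ▸
        mem_verts.2 (mem_edgesAt.1 heu).1
    obtain rfl | rfl : u = v ∨ u = w := by simpa using hmem
    · exact absurd ((mem_core.1 hu).2.symm.trans (mem_outerVerts.1 hv).2) zero_ne_one
    · exact absurd ((mem_core.1 hu).2.symm.trans (mem_outerVerts.1 hw).2) zero_ne_one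
  have hsub : S.cutEdges (S.core X) ⊆
      (((S.outerVerts X).erase v).erase w).image fun v => S.facetsAt v \ S.cutFacets X := by
    intro e he
    obtain ⟨u, hu, rfl⟩ := exists_outerVerts_of_mem_cutEdges_core he
    refine mem_image_of_mem _ (mem_erase.2 ⟨?_, mem_erase.2 ⟨?_, hu⟩⟩) <;> rintro rfl
    · exact hnot ((show S.facetsAt v \ _ = _ from heq) ▸ he)
    · exact hnot he
  have hcard := (Finset.card_le_card hsub).trans card_image_le
  rw [card_erase_of_mem (mem_erase.2 ⟨Ne.symm hvw, hw⟩), card_erase_of_mem hv] at hcard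
  have := hcore.three_le_card_cutEdges
  omega

lemma sdiff_mem_cutEdges_core (hle : #(S.outerVerts X) ≤ 4) (hcore : S.IsSmallCut (S.core X))
    (hv : v ∈ S.outerVerts X) : S.facetsAt v \ S.cutFacets X ∈ S.cutEdges (S.core X) :=
  (sdiff_mem_cutEdges_core_or hv).resolve_right fun ⟨_, hw, hwv, heq⟩ =>
    hwv (injOn_sdiff_cutFacets hle hcore hw hv heq)

lemma card_cutEdges_core (hle : #(S.outerVerts X) ≤ 4) (hcore : S.IsSmallCut (S.core X)) :
    #(S.cutEdges (S.core X)) = #(S.outerVerts X) := by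
  refine le_antisymm ((Finset.card_le_card cutEdges_core_subset_image).trans card_image_le) ?_
  exact card_le_card_of_injOn _ (fun v hv => sdiff_mem_cutEdges_core hle hcore hv)
    (injOn_sdiff_cutFacets hle hcore)

variable (S) in
/-- The facets not cut by `X` that meet `X` outside its core: the second layer of facets of this
side of a belt. -/
def innerFacets (X : Finset V) : Finset Φ :=
  {G | G ∉ S.cutFacets X ∧ ∃ v ∈ X \ S.core X, G ∈ S.facetsAt v}

lemma facetsAt_inter_innerFacets (hv : v ∈ X \ S.core X) :
    S.facetsAt v ∩ S.innerFacets X = S.facetsAt v \ S.cutFacets X := by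
  ext G
  simp only [innerFacets, Finset.mem_inter, mem_filter, Finset.mem_univ, true_and,
    Finset.mem_sdiff, and_congr_right_iff, and_iff_left_iff_imp]
  exact fun hG _ => ⟨v, Finset.mem_sdiff.1 hv, hG⟩

lemma verts_subset_of_mem_innerFacets (hG : G ∈ S.innerFacets X) : S.verts {G} ⊆ X := by
  obtain ⟨hcut, v, hv, hGv⟩ := (mem_filter.1 hG).2
  exact verts_subset_of_notMem_cutFacets hcut hGv (Finset.mem_sdiff.1 hv).1

lemma outerVerts_subset : S.outerVerts X ⊆ X \ S.core X := fun v hv => by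
  rw [mem_outerVerts] at hv
  exact Finset.mem_sdiff.2 ⟨hv.1, fun h => absurd ((mem_core.1 h).2.symm.trans hv.2) zero_ne_one⟩

section ThreeVertices

variable (hX : S.IsSmallCut X) (hp : ∀ v ∈ X, #(S.cutEdges X ∩ S.edgesAt v) ≤ 1)
  (h3 : ∀ F ∈ S.cutFacets X, #(S.verts {F} ∩ X) = 3)
include hX hp h3

namespace IsSmallCut

/-- Otherwise the edge shared by the two cut facets at `v` would lie inside `X`, whereas only the
two ends of its cut edges and one further vertex of each of these facets are in `X`. -/
lemma cutEdges_inter_edgesAt_nonempty (hv : v ∈ X) (hc : #(S.facetsAt v ∩ S.cutFacets X) = 2) :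
    (S.cutEdges X ∩ S.edgesAt v).Nonempty := by
  by_contra hempty
  have hev : S.facetsAt v ∩ S.cutFacets X ∈ S.edgesAt v :=
    mem_edgesAt.2 ⟨Finset.inter_subset_left, hc⟩
  have hcut : S.facetsAt v ∩ S.cutFacets X ∉ S.cutEdges X := fun h =>
    hempty ⟨_, Finset.mem_inter.2 ⟨h, hev⟩⟩
  obtain ⟨u, huv, hverts⟩ := exists_verts_eq_pair hev
  have heu : S.facetsAt v ∩ S.cutFacets X ⊆ S.facetsAt u := mem_verts.1 (hverts ▸ by simp)
  have huX : u ∈ X := by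
    rwa [mem_cutEdges_iff_of_verts_eq hev huv.symm hverts hv, not_not] at hcut
  have heq : S.facetsAt u ∩ S.cutFacets X = S.facetsAt v ∩ S.cutFacets X :=
    (eq_of_subset_of_card_le (Finset.subset_inter heu Finset.inter_subset_right)
      ((hX.card_inter_cutFacets_le_two hp huX).trans hc.ge)).symm
  obtain ⟨F, hF⟩ := card_pos.1 (hc.symm ▸ two_pos)
  obtain ⟨hFv, hFX⟩ := Finset.mem_inter.1 hF
  obtain ⟨v₁, hv₁, v₂, hv₂, hne, e₁, he₁, e₂, he₂, hF₁, hF₂⟩ := hX.exists_two_cutEdges hp hFX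
  have hsub : {v, u, v₁, v₂} ⊆ S.verts {F} ∩ X := by
    simp only [Finset.insert_subset_iff, Finset.singleton_subset_iff, Finset.mem_inter,
      mem_verts_singleton]
    exact ⟨⟨hFv, hv⟩, ⟨heu hF, huX⟩, ⟨(mem_edgesAt.1 (Finset.mem_inter.1 he₁).2).1 hF₁, hv₁⟩,
      (mem_edgesAt.1 (Finset.mem_inter.1 he₂).2).1 hF₂, hv₂⟩
  have hno {x : V} {e : Finset Φ} (hx : x ∈ X) (he : e ∈ S.cutEdges X ∩ S.edgesAt x)
      (hxe : S.facetsAt x ∩ S.cutFacets X = S.facetsAt v ∩ S.cutFacets X) : False := by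
    obtain ⟨he, hex⟩ := Finset.mem_inter.1 he
    exact hcut (hxe ▸ (hX.inter_cutFacets_eq hp hx he hex).symm ▸ he)
  have hcard := Finset.card_le_card hsub
  rw [h3 F hFX, card_insert_of_notMem, card_insert_of_notMem, card_pair hne] at hcard
  · omega
  · rw [Finset.mem_insert, Finset.mem_singleton]
    rintro (rfl | rfl)
    exacts [hno hv₁ he₁ heq, hno hv₂ he₂ heq]
  · rw [Finset.mem_insert, Finset.mem_insert, Finset.mem_singleton]
    rintro (rfl | rfl | rfl)
    exacts [huv rfl, hno hv₁ he₁ rfl, hno hv₂ he₂ rfl]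

lemma card_filter_eq_two : #{v ∈ X | #(S.facetsAt v ∩ S.cutFacets X) = 2} = #(S.cutEdges X) := by
  rw [← sum_card_cutEdges_inter_edgesAt, card_filter]
  refine sum_congr rfl fun v hv => ?_
  split_ifs with hc
  · exact le_antisymm (card_pos.2 (hX.cutEdges_inter_edgesAt_nonempty hp h3 hv hc)) (hp v hv)
  · refine (card_eq_zero.2 (Finset.not_nonempty_iff_eq_empty.1 ?_)).symm
    rintro ⟨e, he⟩
    obtain ⟨he, hev⟩ := Finset.mem_inter.1 he
    exact hc ((hX.inter_cutFacets_eq hp hv he hev).symm ▸ (mem_edgesAt.1 hev).2)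

lemma card_outerVerts : #(S.outerVerts X) = #(S.cutEdges X) := by
  have hsum := cutIncidences_eq (S := S) X
  rw [cutIncidences, sum_const_nat h3, hX.card_cutFacets, sum_congr rfl
    fun v hv => show #(S.facetsAt v ∩ S.cutFacets X) =
      (if #(S.facetsAt v ∩ S.cutFacets X) = 1 then 1 else 0) +
        2 * if #(S.facetsAt v ∩ S.cutFacets X) = 2 then 1 else 0 by
      have := hX.card_inter_cutFacets_le_two hp hv
      interval_cases #(S.facetsAt v ∩ S.cutFacets X) <;> rfl,
    sum_add_distrib, ← mul_sum, ← card_filter, ← card_filter, card_filter_eq_two hX hp h3] at hsum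
  rw [outerVerts]
  omega

lemma sum_sdiff_core (f : ℕ → ℕ) :
    ∑ v ∈ X \ S.core X, f #(S.facetsAt v ∩ S.cutFacets X) = #(S.cutEdges X) * (f 1 + f 2) := by
  have hunion : X \ S.core X =
      S.outerVerts X ∪ {v ∈ X | #(S.facetsAt v ∩ S.cutFacets X) = 2} := by
    ext v
    simp only [Finset.mem_sdiff, mem_core, Finset.mem_union, mem_outerVerts, mem_filter, not_and]
    refine ⟨fun ⟨hv, h0⟩ => ?_, ?_⟩
    · have := hX.card_inter_cutFacets_le_two hp hv
      have := h0 hv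
      simp only [hv, true_and]
      omega
    · rintro (⟨hv, h⟩ | ⟨hv, h⟩) <;> exact ⟨hv, fun _ => by omega⟩
  have hdisj : Disjoint (S.outerVerts X) {v ∈ X | #(S.facetsAt v ∩ S.cutFacets X) = 2} :=
    Finset.disjoint_left.2 fun v h h' => by
      have := (mem_outerVerts.1 h).2.symm.trans (mem_filter.1 h').2
      omega
  rw [hunion, sum_union hdisj, sum_congr rfl fun v hv => congrArg f (mem_outerVerts.1 hv).2,
    sum_congr rfl fun v hv => congrArg f (mem_filter.1 hv).2, sum_const, sum_const,
    hX.card_outerVerts hp h3, hX.card_filter_eq_two hp h3, smul_eq_mul, smul_eq_mul, mul_add]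

lemma sum_card_verts_innerFacets :
    ∑ G ∈ S.innerFacets X, #(S.verts {G} ∩ (X \ S.core X)) = 3 * #(S.cutEdges X) := by
  rw [sum_card_verts_inter, mul_comm, ← hX.sum_sdiff_core hp h3 (3 - ·)]
  refine sum_congr rfl fun v hv => ?_
  rw [facetsAt_inter_innerFacets hv, card_sdiff, S.card_facetsAt, Finset.inter_comm]

/-- With an empty core there would be at most two inner facets, as these have at most twelve
vertices in all, and they would share at least three vertices. -/
lemma core_nonempty (h5 : ∀ F, 5 ≤ #(S.verts {F})) : (S.core X).Nonempty := by
  by_contra hcore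
  have hsum := hX.sum_card_verts_innerFacets hp h3
  rw [Finset.not_nonempty_iff_eq_empty.1 hcore, Finset.sdiff_empty] at hsum
  have hle := card_nsmul_le_sum (S.innerFacets X) (fun G => #(S.verts {G} ∩ X)) 5 fun G hG => by
    rw [Finset.inter_eq_left.2 (verts_subset_of_mem_innerFacets hG)]
    exact h5 G
  rw [hsum, smul_eq_mul] at hle
  have hK := hX.card_le
  have hsub : S.outerVerts X ⊆ S.verts (S.innerFacets X) := fun v hv => by
    have heq := facetsAt_inter_innerFacets (outerVerts_subset hv)
    have hcard := (mem_edgesAt.1 (sdiff_mem_edgesAt hv)).2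
    rw [← heq] at hcard
    rw [mem_verts, ← Finset.inter_eq_right]
    exact Finset.eq_of_subset_of_card_le Finset.inter_subset_right (by rw [hcard]; omega)
  obtain ⟨v, hv⟩ := card_pos.1 (show 0 < #(S.outerVerts X) by
    rw [hX.card_outerVerts hp h3]; exact hX.three_le_card_cutEdges.trans_lt' (by decide))
  have htwo : 2 ≤ #(S.innerFacets X) := by
    rw [← (mem_edgesAt.1 (sdiff_mem_edgesAt hv)).2,
      ← facetsAt_inter_innerFacets (outerVerts_subset hv)]
    exact Finset.card_le_card Finset.inter_subset_right
  have := (Finset.card_le_card hsub).trans (card_verts_le_two (by omega))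
  rw [hX.card_outerVerts hp h3] at this
  exact absurd this (by have := hX.three_le_card_cutEdges; omega)

end IsSmallCut
end ThreeVertices

/-- An uncut facet shares at most two vertices with each of the at most four cut facets. -/
lemma exists_card_inter_cutFacets_le_one (hX : S.IsSmallCut X) (hG : G ∉ S.cutFacets X)
    (h5 : 5 ≤ #(S.verts {G})) : ∃ v ∈ S.verts {G}, #(S.facetsAt v ∩ S.cutFacets X) ≤ 1 := by
  by_contra! hlt
  have hlow := card_nsmul_le_sum _ _ 2 hlt
  have hup := sum_le_card_nsmul (S.cutFacets X) (fun F => #(S.verts {F} ∩ S.verts {G})) 2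
    fun F hF => by
      have hFG : #{F, G} = 2 := card_pair fun h => hG (h ▸ hF)
      refine (Finset.card_le_card fun v hv => ?_).trans (card_verts_le_two (S := S) hFG)
      simpa [Finset.insert_subset_iff] using hv
  rw [sum_card_verts_inter] at hup
  rw [smul_eq_mul] at hlow hup
  have := hX.card_cutFacets
  have := hX.card_le
  omega

lemma innerFacets_subset_cutFacets_core (hX : S.IsSmallCut X) (hle : #(S.outerVerts X) ≤ 4)
    (hcore : S.IsSmallCut (S.core X)) (h5 : ∀ F, 5 ≤ #(S.verts {F})) :
    S.innerFacets X ⊆ S.cutFacets (S.core X) := fun G hG => by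
  obtain ⟨hcut, w, hw, hGw⟩ := (mem_filter.1 hG).2
  obtain ⟨v, hGv, hv⟩ := exists_card_inter_cutFacets_le_one hX hcut (h5 G)
  have hvX := verts_subset_of_mem_innerFacets hG hGv
  rw [mem_verts_singleton] at hGv
  obtain hv | hv := Nat.le_one_iff_eq_zero_or_eq_one.1 hv
  · exact mem_cutFacets.2 (exists_mem_cutEdges hGv (mem_core.2 ⟨hvX, hv⟩) hGw
      (Finset.mem_sdiff.1 hw).2)
  · exact subset_cutFacets (sdiff_mem_cutEdges_core hle hcore (mem_outerVerts.2 ⟨hvX, hv⟩))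
      (Finset.mem_sdiff.2 ⟨hGv, hcut⟩)

lemma cutFacets_core_subset_innerFacets : S.cutFacets (S.core X) ⊆ S.innerFacets X := fun G hG => by
  obtain ⟨e, he, hGe⟩ := mem_cutFacets.1 hG
  obtain ⟨v, hv, rfl⟩ := exists_outerVerts_of_mem_cutEdges_core he
  rw [Finset.mem_sdiff] at hGe
  exact mem_filter.2 ⟨Finset.mem_univ G, hGe.2, v, outerVerts_subset hv, hGe.1⟩

lemma IsSmallCut.core (hX : S.IsSmallCut X) (hp : ∀ v ∈ X, #(S.cutEdges X ∩ S.edgesAt v) ≤ 1)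
    (h3 : ∀ F ∈ S.cutFacets X, #(S.verts {F} ∩ X) = 3) (h5 : ∀ F, 5 ≤ #(S.verts {F})) :
    S.IsSmallCut (S.core X) where
  nonempty := hX.core_nonempty hp h3 h5
  compl_nonempty := hX.compl_nonempty.mono (compl_subset_compl.2 core_subset)
  card_le := ((Finset.card_le_card cutEdges_core_subset_image).trans card_image_le).trans
    ((hX.card_outerVerts hp h3).trans_le hX.card_le)

/-- The facets cut by the core are the inner facets, so the vertices of `X` outside the core take
up `3 * #(S.cutEdges X)` of their incidences. -/
lemma cutIncidences_core_add (hX : S.IsSmallCut X)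
    (hp : ∀ v ∈ X, #(S.cutEdges X ∩ S.edgesAt v) ≤ 1)
    (h3 : ∀ F ∈ S.cutFacets X, #(S.verts {F} ∩ X) = 3) (h5 : ∀ F, 5 ≤ #(S.verts {F})) :
    S.cutIncidences (S.core X) + 3 * #(S.cutEdges X) =
      ∑ F ∈ S.cutFacets (S.core X), #(S.verts {F}) := by
  have hcore := hX.core hp h3 h5
  have hle := (hX.card_outerVerts hp h3).trans_le hX.card_le
  have heq := cutFacets_core_subset_innerFacets.antisymm
    (innerFacets_subset_cutFacets_core hX hle hcore h5)
  rw [← hX.sum_card_verts_innerFacets hp h3, cutIncidences, ← heq, ← sum_add_distrib]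
  refine sum_congr rfl fun G hG => ?_
  rw [← card_inter_add_card_sdiff (S.verts {G}) (S.core X)]
  congr 2
  have := verts_subset_of_mem_innerFacets (heq ▸ hG)
  ext v
  simp only [Finset.mem_inter, Finset.mem_sdiff, and_congr_right_iff, and_iff_right_iff_imp]
  exact fun hv _ => this hv

section PentagonsAndHexagons

variable (h5 : ∀ F, 5 ≤ #(S.verts {F})) (h6 : ∀ F, #(S.verts {F}) ≤ 6)
include h5 h6

variable (hX : S.IsSmallCut X) (hle : S.cutIncidences X ≤ 3 * #(S.cutEdges X))
  (ih : ∀ Y ⊂ X, S.IsSmallCut Y → S.cutIncidences Y ≤ 3 * #(S.cutEdges Y) →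
    #Y + 2 ≤ #(S.cutEdges Y))
include hX hle ih

omit hle in
lemma exists_two_le_of_forall_card_eq_three (h3 : ∀ F ∈ S.cutFacets X, #(S.verts {F} ∩ X) = 3) :
    ∃ v ∈ X, 2 ≤ #(S.cutEdges X ∩ S.edgesAt v) := by
  by_contra! hlt
  have hp : ∀ v ∈ X, #(S.cutEdges X ∩ S.edgesAt v) ≤ 1 := fun v hv => Nat.le_of_lt_succ (hlt v hv)
  have hcore := hX.core hp h3 h5
  have hssub : S.core X ⊂ X := core_subset.ssubset_of_ne fun h => by
    have hcard := Finset.card_le_card (outerVerts_subset (S := S) (X := X))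
    rw [h, Finset.sdiff_self, hX.card_outerVerts hp h3] at hcard
    exact absurd (hX.three_le_card_cutEdges.trans hcard) (by simp)
  have hcut := card_cutEdges_core ((hX.card_outerVerts hp h3).trans_le hX.card_le) hcore
  rw [hX.card_outerVerts hp h3] at hcut
  have hadd := cutIncidences_core_add hX hp h3 h5
  have hlow := card_nsmul_le_sum (S.cutFacets (S.core X)) _ 5 fun F _ => h5 F
  have hup := sum_le_card_nsmul (S.cutFacets (S.core X)) _ 6 fun F _ => h6 F
  have hinc : S.cutIncidences (S.core X) ≤ #(S.core X) • 3 := by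
    rw [cutIncidences_eq]
    exact sum_le_card_nsmul _ _ 3 fun v _ =>
      (Finset.card_le_card Finset.inter_subset_left).trans_eq (S.card_facetsAt v)
  rw [smul_eq_mul, hcore.card_cutFacets] at hlow hup
  rw [smul_eq_mul] at hinc
  rw [hcut] at hlow hup
  have := ih _ hssub hcore (by omega)
  have := hX.card_le
  omega

lemma exists_two_le_of_card_le_two (hF : F ∈ S.cutFacets X) (h2 : #(S.verts {F} ∩ X) ≤ 2) :
    ∃ v ∈ X, 2 ≤ #(S.cutEdges X ∩ S.edgesAt v) := by
  by_contra! hlt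
  have hp : ∀ v ∈ X, #(S.cutEdges X ∩ S.edgesAt v) ≤ 1 := fun v hv => Nat.le_of_lt_succ (hlt v hv)
  obtain ⟨v₁, hv₁, v₂, hv₂, hne, hpair, e₁, he₁, e₂, he₂, hF₁, hF₂, H, hH, hHv₁, hHv₂⟩ :=
    hX.exists_pair_of_card_le_two hp hF h2
  have hcut := card_cutEdges_erase_pair_le hv₁ hv₂ hne he₁ he₂ hH hHv₁ hHv₂ hF₁ hF₂
  have hinc := cutIncidences_erase_pair_le hX hp hv₁ hv₂ hne he₁ he₂ hH hHv₁ hHv₂ hpair hF (h6 H)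
  have hthree := three_le_card_erase_pair hv₁ hH hHv₁ (h5 H) (v₂ := v₂)
  have hsub : (X.erase v₁).erase v₂ ⊂ X :=
    (erase_subset _ _).trans_ssubset (erase_ssubset hv₁)
  have hY : S.IsSmallCut ((X.erase v₁).erase v₂) :=
    ⟨card_pos.1 (by omega), hX.compl_nonempty.mono (compl_subset_compl.2 hsub.subset),
      hcut.trans hX.card_le⟩
  have := card_cutEdges_erase (S := S) hv₁
  have := card_cutEdges_erase (S := S) (mem_erase.2 ⟨hne.symm, hv₂⟩)
  have := hX.three_le_card_cutEdges
  have := hX.card_le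
  have := hY.three_le_card_cutEdges
  have := ih _ hsub hY (by omega)
  omega

lemma exists_two_le_card_cutEdges_inter_edgesAt : ∃ v ∈ X, 2 ≤ #(S.cutEdges X ∩ S.edgesAt v) := by
  by_cases h : ∃ F ∈ S.cutFacets X, #(S.verts {F} ∩ X) ≤ 2
  · obtain ⟨F, hF, h2⟩ := h
    exact exists_two_le_of_card_le_two h5 h6 hX hle ih hF h2
  · push Not at h
    have hsum : ∑ F ∈ S.cutFacets X, #(S.verts {F} ∩ X) = ∑ F ∈ S.cutFacets X, 3 :=
      le_antisymm (by rwa [sum_const, smul_eq_mul, hX.card_cutFacets, mul_comm]) (sum_le_sum h)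
    exact exists_two_le_of_forall_card_eq_three h5 h6 hX ih fun F hF =>
      ((sum_eq_sum_iff_of_le h).1 hsum.symm F hF).symm

omit hle ih in
/-- By Euler's formula the bound on the incidences says that `X` contains at most six pentagons; the
conclusion says that `X` is a vertex or the two ends of an edge. -/
theorem IsSmallCut.card_add_two_le (hle : S.cutIncidences X ≤ 3 * #(S.cutEdges X)) :
    #X + 2 ≤ #(S.cutEdges X) := by
  induction X using Finset.strongInduction with
  | H X ih =>
    obtain ⟨v, hv, h2⟩ := exists_two_le_card_cutEdges_inter_edgesAt h5 h6 hX hle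
      fun Y hYX hY hle => ih Y hYX hY hle
    have hcard := card_erase_add_one hv
    obtain hempty | hne := (X.erase v).eq_empty_or_nonempty
    · rw [← hcard, hempty, Finset.card_empty]
      exact hX.three_le_card_cutEdges
    · obtain ⟨hY, hK, hK'⟩ := hX.erase hv hne h2
      have := cutIncidences_erase_add_three_le hv h2
      have := ih _ (erase_ssubset hv) hY (by omega)
      omega

end PentagonsAndHexagons

lemma isSmallCut_of_cutEdges_nonempty (h : (S.cutEdges X).Nonempty) (hle : #(S.cutEdges X) ≤ 4) :
    S.IsSmallCut X := by
  have hne {Y : Finset V} (h : (S.cutEdges Y).Nonempty) : Y.Nonempty := by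
    obtain ⟨e, he⟩ := h
    obtain ⟨v, hv, -⟩ := exists_mem_edgesAt_of_mem_cutEdges he
    exact ⟨v, hv⟩
  exact ⟨hne h, hne (cutEdges_compl (S := S) (X := X) ▸ h), hle⟩

lemma IsSmallCut.compl (hX : S.IsSmallCut X) : S.IsSmallCut Xᶜ :=
  ⟨hX.compl_nonempty, by simpa using hX.nonempty, cutEdges_compl (S := S) (X := X) ▸ hX.card_le⟩

lemma cutFacets_compl : S.cutFacets Xᶜ = S.cutFacets X := by
  simp only [cutFacets, cutEdges_compl]

lemma cutIncidences_add_compl (X : Finset V) :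
    S.cutIncidences X + S.cutIncidences Xᶜ = ∑ F ∈ S.cutFacets X, #(S.verts {F}) := by
  rw [cutIncidences, cutIncidences, cutFacets_compl, ← sum_add_distrib]
  refine sum_congr rfl fun F _ => ?_
  rw [← sdiff_eq_inter_compl, card_inter_add_card_sdiff]

section PentagonsAndHexagons

variable (h5 : ∀ F, 5 ≤ #(S.verts {F})) (h6 : ∀ F, #(S.verts {F}) ≤ 6)
include h5 h6

lemma exists_cutEdges_eq_card_add_two_le {M : Finset (Finset Φ)}
    (hM : ∀ e ∈ M, ∃ v, e ∈ S.edgesAt v) (heven : ∀ F, Even #{e ∈ M | F ∈ e}) (hne : M.Nonempty)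
    (hle : #M ≤ 4) : ∃ X, S.cutEdges X = M ∧ #X + 2 ≤ #M := by
  obtain ⟨X, rfl⟩ := exists_cutEdges_eq hM heven
  have hX := isSmallCut_of_cutEdges_nonempty hne hle
  have hsum := sum_le_card_nsmul (S.cutFacets X) _ 6 fun F _ => h6 F
  rw [← cutIncidences_add_compl, hX.card_cutFacets, smul_eq_mul] at hsum
  by_cases hinc : S.cutIncidences X ≤ 3 * #(S.cutEdges X)
  · exact ⟨X, rfl, hX.card_add_two_le h5 h6 hinc⟩
  · refine ⟨Xᶜ, cutEdges_compl, ?_⟩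
    rw [← cutEdges_compl (X := X)] at hsum hinc ⊢
    exact hX.compl.card_add_two_le h5 h6 (by omega)

omit [Fintype Φ] in
/-- In particular there are no 3-belts and no 4-belts. -/
theorem exists_facetsAt_subset_range [Finite Φ] {k : ℕ} (h3 : 3 ≤ k) (h4 : k ≤ 4) {B : Fin k → Φ}
    (hB : Function.Injective B) (hadj : ∀ i, ∃ v, B i ∈ S.facetsAt v ∧ B (nxt i) ∈ S.facetsAt v) :
    ∃ v, ∀ F ∈ S.facetsAt v, F ∈ Set.range B := by
  cases nonempty_fintype Φ
  have hcard := card_chainEdges h3 hB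
  obtain ⟨X, hX, hle⟩ := exists_cutEdges_eq_card_add_two_le h5 h6 (M := chainEdges B)
    (fun e he => by
      obtain ⟨i, -, rfl⟩ := mem_image.1 he
      obtain ⟨v, hv, hv'⟩ := hadj i
      exact ⟨v, mem_edgesAt.2 ⟨by simp [Finset.insert_subset_iff, hv, hv'],
        card_pair (hB.ne (nxt_ne (by omega) i).symm)⟩⟩)
    (even_card_filter_mem_chainEdges h3 hB) (card_pos.1 (by omega)) (by omega)
  obtain ⟨v, -, hv⟩ : ∃ v ∈ X, 1 < #(S.cutEdges X ∩ S.edgesAt v) :=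
    exists_lt_of_sum_lt (by
      rw [sum_card_cutEdges_inter_edgesAt, sum_const, smul_eq_mul, mul_one, hX]; omega)
  refine ⟨v, fun F hF => ?_⟩
  obtain ⟨e, he, hFe⟩ := mem_cutFacets.1 (subset_cutFacets_of_two_le hv hF)
  obtain ⟨i, -, rfl⟩ := mem_image.1 (hX ▸ he)
  obtain rfl | rfl : F = B i ∨ F = B (nxt i) := by simpa using hFe
  exacts [⟨i, rfl⟩, ⟨nxt i, rfl⟩]

end PentagonsAndHexagons

end SimpleSphere

end Combinatorics

section ConvexSets

section Module

variable {M : Type*} [AddCommGroup M] [Module ℝ M] {A C : Set M} {x : M}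

lemma mem_openSegment_add_smul_sub (x w : M) {ε : ℝ} (hε : 0 < ε) :
    x ∈ openSegment ℝ w (x + ε • (x - w)) := by
  refine ⟨ε / (1 + ε), 1 / (1 + ε), by positivity, by positivity, by field_simp; ring, ?_⟩
  match_scalars
  · field_simp
    ring
  · field_simp

/-- The smallest extreme subset of the convex set `A` containing the convex subset `C`: the points
of `A` from which one can walk into `C` and a little further inside `A`. -/
def faceHull (A C : Set M) : Set M := {x ∈ A | ∃ y ∈ C, ∃ ε > (0 : ℝ), y + ε • (y - x) ∈ A}

lemma subset_faceHull (hCA : C ⊆ A) : C ⊆ faceHull A C := fun x hx =>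
  ⟨hCA hx, x, hx, 1, one_pos, by simpa using hCA hx⟩

lemma add_smul_sub_mem_of_le (hA : Convex ℝ A) {y : M} (hy : y ∈ A) {ε δ : ℝ} (hδ : 0 ≤ δ)
    (hδε : δ ≤ ε) (h : y + ε • (y - x) ∈ A) : y + δ • (y - x) ∈ A := by
  obtain rfl | hε := (hδ.trans hδε).eq_or_lt
  · rwa [le_antisymm hδε hδ]
  · have := hA.add_smul_sub_mem hy h ⟨div_nonneg hδ hε.le, div_le_one_of_le₀ hδε hε.le⟩
    rwa [add_sub_cancel_left, smul_smul, div_mul_cancel₀ _ hε.ne'] at this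

lemma convex_faceHull (hA : Convex ℝ A) (hC : Convex ℝ C) (hCA : C ⊆ A) :
    Convex ℝ (faceHull A C) := by
  rintro x ⟨hx, y, hy, ε, hε, hxy⟩ x' ⟨hx', y', hy', ε', hε', hxy'⟩ a b ha hb hab
  have hδ : 0 < min ε ε' := lt_min hε hε'
  have h := hA (add_smul_sub_mem_of_le hA (hCA hy) hδ.le (min_le_left ε ε') hxy)
    (add_smul_sub_mem_of_le hA (hCA hy') hδ.le (min_le_right ε ε') hxy') ha hb hab
  refine ⟨hA hx hx' ha hb hab, _, hC hy hy' ha hb hab, _, hδ, ?_⟩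
  convert h using 1
  module

lemma isExtreme_faceHull (hA : Convex ℝ A) : IsExtreme ℝ A (faceHull A C) := by
  refine ⟨fun x hx => hx.1, ?_⟩
  rintro p hp p' hp' x ⟨-, y, hy, ε, hε, hxy⟩ ⟨a, b, ha, hb, hab, rfl⟩
  refine ⟨hp, y, hy, ε * a / (1 + ε * b), by positivity, ?_⟩
  have hmem := hA hp' hxy (a := ε * b / (1 + ε * b)) (b := 1 / (1 + ε * b)) (by positivity)
    (by positivity) (by field_simp; ring)
  convert hmem using 1
  obtain rfl : a = 1 - b := by linarith
  match_scalars <;> field_simp <;> ring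

end Module

section Normed

variable {M : Type*} [NormedAddCommGroup M] [NormedSpace ℝ M] {A : Set M} {x y w : M}

lemma exists_add_smul_mem_of_mem_intrinsicInterior (hx : x ∈ intrinsicInterior ℝ A)
    (hw : w ∈ affineSpan ℝ A) : ∃ ε > (0 : ℝ), x + ε • (x - w) ∈ A := by
  obtain ⟨y, hy, rfl⟩ := mem_intrinsicInterior.1 hx
  let γ : ℝ → affineSpan ℝ A := fun s => ⟨_, AffineMap.lineMap_mem s y.2 hw⟩
  have hγ : ContinuousAt γ 0 := (AffineMap.lineMap_continuous.subtype_mk _).continuousAt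
  have hγ0 : γ 0 = y := Subtype.ext (AffineMap.lineMap_apply_zero _ _)
  have hev : ∀ᶠ s in nhds 0, (γ s : M) ∈ A :=
    hγ (hγ0.symm ▸ mem_interior_iff_mem_nhds.1 hy)
  obtain ⟨ε, hε, hball⟩ := Metric.eventually_nhds_iff.1 hev
  refine ⟨ε / 2, by positivity, ?_⟩
  have h := hball (y := -(ε / 2)) (by
    rw [dist_zero_right, norm_neg, Real.norm_of_nonneg (by positivity)]
    linarith)
  convert h using 1
  simp only [γ, AffineMap.lineMap_apply_module']
  module

lemma openSegment_subset_intrinsicInterior (hA : Convex ℝ A) (hx : x ∈ A)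
    (hy : y ∈ intrinsicInterior ℝ A) : openSegment ℝ x y ⊆ intrinsicInterior ℝ A := by
  obtain ⟨y, hy', rfl⟩ := mem_intrinsicInterior.1 hy
  rw [openSegment_eq_image_lineMap]
  rintro _ ⟨s, hs, rfl⟩
  let x' : affineSpan ℝ A := ⟨x, subset_affineSpan ℝ A hx⟩
  have : Nonempty (affineSpan ℝ A) := ⟨x'⟩
  refine mem_intrinsicInterior.2 ⟨AffineMap.homothety x' s y, ?_, rfl⟩
  refine interior_mono ?_ ((AffineMap.homothety_isOpenMap x' s hs.1.ne').image_interior_subset _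
    (mem_image_of_mem _ hy'))
  rintro _ ⟨z, hz, rfl⟩
  exact hA.lineMap_mem hx hz ⟨hs.1.le, hs.2.le⟩

lemma subset_closure_intrinsicInterior [FiniteDimensional ℝ M] (hA : Convex ℝ A) :
    A ⊆ closure (intrinsicInterior ℝ A) := fun x hx => by
  obtain ⟨y, hy⟩ := Set.Nonempty.intrinsicInterior hA ⟨x, hx⟩
  exact closure_mono (openSegment_subset_intrinsicInterior hA hx hy)
    (segment_subset_closure_openSegment (left_mem_segment ℝ x y))

lemma convexHull_extremePoints_of_finite (hc : IsCompact A) (hconv : Convex ℝ A)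
    (hfin : (A.extremePoints ℝ).Finite) : convexHull ℝ (A.extremePoints ℝ) = A := by
  conv_rhs => rw [← closure_convexHull_extremePoints hc hconv]
  exact (hfin.isClosed_convexHull ℝ).closure_eq.symm

end Normed

end ConvexSets

section Polytopes

variable {P F G B C : Set E3} {v w x : E3}

lemma IsPolytope.isCompact (hP : IsPolytope P) : IsCompact P := by
  obtain ⟨V, rfl⟩ := hP
  exact V.finite_toSet.isCompact_convexHull ℝ

lemma IsPolytope.convex (hP : IsPolytope P) : Convex ℝ P := by
  obtain ⟨V, rfl⟩ := hP
  exact convex_convexHull ℝ _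

lemma IsPolytope.finite_extremePoints (hP : IsPolytope P) : (P.extremePoints ℝ).Finite := by
  obtain ⟨V, rfl⟩ := hP
  exact V.finite_toSet.subset extremePoints_convexHull_subset

lemma IsPolytope.convexHull_extremePoints (hP : IsPolytope P) :
    convexHull ℝ (P.extremePoints ℝ) = P :=
  convexHull_extremePoints_of_finite hP.isCompact hP.convex hP.finite_extremePoints

lemma isPolytope_of_finite_extremePoints (hc : IsCompact P) (hconv : Convex ℝ P)
    (hfin : (P.extremePoints ℝ).Finite) : IsPolytope P :=
  ⟨hfin.toFinset, by rw [hfin.coe_toFinset, convexHull_extremePoints_of_finite hc hconv hfin]⟩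

lemma IsPolytope.subset_of_extremePoints_subset (hP : IsPolytope P) (hC : Convex ℝ C)
    (h : P.extremePoints ℝ ⊆ C) : P ⊆ C :=
  hP.convexHull_extremePoints ▸ convexHull_min h hC

lemma IsPolytope.subset_convexHull_of_isExtreme (hP : IsPolytope P) (hB : IsExtreme ℝ P B) :
    B ⊆ convexHull ℝ (B.extremePoints ℝ) := by
  intro x hx
  set V := P.extremePoints ℝ
  have hVB : V ∩ B = B.extremePoints ℝ := by rw [hB.extremePoints_eq, inter_comm]
  have hdiff : convexHull ℝ (V \ B) ⊆ P \ B :=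
    convexHull_min (sdiff_subset_sdiff_left extremePoints_subset) (hB.convex_sdiff hP.convex)
  have hxV : x ∈ convexHull ℝ (V ∩ B ∪ V \ B) := by
    rw [inter_union_sdiff, hP.convexHull_extremePoints]
    exact hB.1 hx
  obtain hne | hne := (V ∩ B).eq_empty_or_nonempty
  · rw [hne, empty_union] at hxV
    exact absurd hx (hdiff hxV).2
  obtain hne' | hne' := (V \ B).eq_empty_or_nonempty
  · rwa [hne', union_empty, hVB] at hxV
  rw [convexHull_union hne hne', mem_convexJoin] at hxV
  obtain ⟨a, ha, b, hb, hxab⟩ := hxV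
  rw [hVB] at ha
  rw [← insert_endpoints_openSegment] at hxab
  obtain rfl | rfl | hxab := hxab
  · exact ha
  · exact absurd hx (hdiff hb).2
  · have haP : a ∈ P := hP.convexHull_extremePoints ▸
      convexHull_mono hB.extremePoints_subset_extremePoints ha
    exact absurd (hB.right_mem_of_mem_openSegment haP (hdiff hb).1 hx hxab) (hdiff hb).2

lemma IsPolytope.isFaceOf (hP : IsPolytope P) (hB : IsExtreme ℝ P B) (hconv : Convex ℝ B)
    (hne : B.Nonempty) : IsFaceOf B P := by
  have heq : convexHull ℝ (B.extremePoints ℝ) = B :=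
    (convexHull_min extremePoints_subset hconv).antisymm (hP.subset_convexHull_of_isExtreme hB)
  have hfin := hP.finite_extremePoints.subset hB.extremePoints_subset_extremePoints
  exact ⟨hne, heq ▸ hfin.isClosed_convexHull ℝ, hconv, hB⟩

lemma IsPolytope.isFaceOf_self (hP : IsPolytope P) (hne : P.Nonempty) : IsFaceOf P P :=
  ⟨hne, hP.isCompact.isClosed, hP.convex, .rfl⟩

lemma isVertexOf_iff : IsVertexOf v P ↔ v ∈ P.extremePoints ℝ := by
  rw [← isExtreme_singleton]
  exact ⟨fun h => h.2.2.2,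
    fun h => ⟨singleton_nonempty v, isClosed_singleton, convex_singleton v, h⟩⟩

namespace IsFaceOf

lemma nonempty (hF : IsFaceOf F P) : F.Nonempty := hF.1

lemma convex (hF : IsFaceOf F P) : Convex ℝ F := hF.2.2.1

lemma isExtreme (hF : IsFaceOf F P) : IsExtreme ℝ P F := hF.2.2.2

lemma subset (hF : IsFaceOf F P) : F ⊆ P := hF.isExtreme.1

lemma isPolytope (hF : IsFaceOf F P) (hP : IsPolytope P) : IsPolytope F :=
  isPolytope_of_finite_extremePoints (hP.isCompact.of_isClosed_subset hF.2.1 hF.subset) hF.convex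
    (hP.finite_extremePoints.subset hF.isExtreme.extremePoints_subset_extremePoints)

lemma inter (hF : IsFaceOf F P) (hG : IsFaceOf G P) (hne : (F ∩ G).Nonempty) :
    IsFaceOf (F ∩ G) P :=
  ⟨hne, hF.2.1.inter hG.2.1, hF.convex.inter hG.convex, hF.isExtreme.inter hG.isExtreme⟩

lemma trans (hF : IsFaceOf F P) (hG : IsFaceOf G F) : IsFaceOf G P :=
  ⟨hG.1, hG.2.1, hG.convex, hF.isExtreme.trans hG.isExtreme⟩

lemma mono (hF : IsFaceOf F P) (hGP : G ⊆ P) (hFG : F ⊆ G) : IsFaceOf F G :=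
  ⟨hF.1, hF.2.1, hF.convex, hF.isExtreme.mono hGP hFG⟩

lemma isVertexOf_iff_mem (hF : IsFaceOf F P) : IsVertexOf v F ↔ IsVertexOf v P ∧ v ∈ F := by
  rw [isVertexOf_iff, isVertexOf_iff, hF.isExtreme.extremePoints_eq, mem_inter_iff, and_comm]

lemma exists_isVertexOf (hF : IsFaceOf F P) (hP : IsPolytope P) : ∃ v ∈ F, IsVertexOf v P := by
  obtain ⟨v, hv⟩ := (hF.isPolytope hP).isCompact.extremePoints_nonempty hF.nonempty
  exact ⟨v, hv.1, (hF.isVertexOf_iff_mem.1 (isVertexOf_iff.2 hv)).1⟩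

lemma segment_subset (hF : IsFaceOf F P) {a b : E3} (ha : a ∈ P) (hb : b ∈ P)
    (hx : x ∈ openSegment ℝ a b) (hxF : x ∈ F) : segment ℝ a b ⊆ F :=
  hF.convex.segment_subset (hF.isExtreme.2 ha hb hxF hx)
    (hF.isExtreme.right_mem_of_mem_openSegment ha hb hxF hx)

end IsFaceOf

lemma IsVertexOf.mem (hv : IsVertexOf v P) : v ∈ P := (isVertexOf_iff.1 hv).1

lemma IsPolytope.finite_faces (hP : IsPolytope P) : {F | IsFaceOf F P}.Finite := by
  refine .of_finite_image (f := fun F => F.extremePoints ℝ)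
    (hP.finite_extremePoints.finite_subsets.subset ?_) ?_
  · rintro _ ⟨F, hF, rfl⟩
    exact (IsFaceOf.isExtreme hF).extremePoints_subset_extremePoints
  · intro F hF G hG h
    rw [← (IsFaceOf.isPolytope hF hP).convexHull_extremePoints,
      ← (IsFaceOf.isPolytope hG hP).convexHull_extremePoints]
    exact congrArg _ h

lemma IsFaceOf.mem_of_mem_affineSpan (hF : IsFaceOf F P) (hw : w ∈ P) (hwF : w ∈ affineSpan ℝ F) :
    w ∈ F := by
  obtain ⟨x, hx⟩ := hF.nonempty.intrinsicInterior hF.convex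
  obtain ⟨ε, hε, hxε⟩ := exists_add_smul_mem_of_mem_intrinsicInterior hx hwF
  have hxw := mem_openSegment_add_smul_sub x w hε
  exact hF.isExtreme.2 hw (hF.subset hxε) (intrinsicInterior_subset hx) hxw

lemma affineSpan_eq_of_subset_of_setDim_le (hne : F.Nonempty) (hFG : F ⊆ G)
    (hd : setDim G ≤ setDim F) : affineSpan ℝ F = affineSpan ℝ G := by
  refine AffineSubspace.ext_of_direction_eq ?_ ?_
  · rw [direction_affineSpan, direction_affineSpan]
    exact Submodule.eq_of_le_of_finrank_le (vectorSpan_mono ℝ hFG) hd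
  · obtain ⟨x, hx⟩ := hne
    exact ⟨x, mem_affineSpan ℝ hx, mem_affineSpan ℝ (hFG hx)⟩

lemma IsFaceOf.eq_of_subset (hF : IsFaceOf F P) (hFG : F ⊆ G) (hGP : G ⊆ P)
    (hd : setDim G ≤ setDim F) : F = G :=
  hFG.antisymm fun _ hw => hF.mem_of_mem_affineSpan (hGP hw)
    (affineSpan_eq_of_subset_of_setDim_le hF.nonempty hFG hd ▸ mem_affineSpan ℝ hw)

end Polytopes

section Slices

variable {P G A B C E : Set E3} {v w : E3} {ℓ : E3 →L[ℝ] ℝ} {c : ℝ} {d : ℕ}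

/-- The section of `A` by the affine hyperplane `ℓ = c`. -/
def slice (ℓ : E3 →L[ℝ] ℝ) (c : ℝ) (A : Set E3) : Set E3 := A ∩ {x | ℓ x = c}

lemma convex_slice (hA : Convex ℝ A) : Convex ℝ (slice ℓ c A) :=
  hA.inter (convex_hyperplane ℓ.isLinear c)

lemma isClosed_slice (hA : IsClosed A) : IsClosed (slice ℓ c A) :=
  hA.inter (isClosed_eq ℓ.continuous continuous_const)

lemma IsFaceOf.isFaceOf_slice (hB : IsFaceOf B A) (hne : (slice ℓ c B).Nonempty) :
    IsFaceOf (slice ℓ c B) (slice ℓ c A) :=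
  ⟨hne, isClosed_slice hB.2.1, convex_slice hB.convex, inter_subset_inter_left _ hB.subset,
    fun _ hx _ hy _ hz hzxy => ⟨hB.isExtreme.2 hx.1 hy.1 hz.1 hzxy, hx.2⟩⟩

lemma slice_faceHull (hC : IsFaceOf C (slice ℓ c A)) : slice ℓ c (faceHull A C) = C := by
  refine Subset.antisymm ?_
    fun x hx => ⟨subset_faceHull (hC.subset.trans inter_subset_left) hx, (hC.subset hx).2⟩
  rintro x ⟨⟨hxA, y, hy, ε, hε, hxy⟩, hxc : ℓ x = c⟩
  have hyc : ℓ y = c := (hC.subset hy).2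
  refine hC.isExtreme.2 ⟨hxA, hxc⟩ ⟨hxy, ?_⟩ hy (mem_openSegment_add_smul_sub y x hε)
  simp [hxc, hyc]

lemma IsPolytope.isFaceOf_faceHull (hP : IsPolytope P) (hC : IsFaceOf C (slice ℓ c P)) :
    IsFaceOf (faceHull P C) P :=
  have hCP := hC.subset.trans inter_subset_left
  hP.isFaceOf (isExtreme_faceHull hP.convex) (convex_faceHull hP.convex hC.convex hCP)
    (hC.nonempty.mono (subset_faceHull hCP))

lemma IsPolytope.isPolytope_slice (hP : IsPolytope P) : IsPolytope (slice ℓ c P) := by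
  refine isPolytope_of_finite_extremePoints
    (hP.isCompact.of_isClosed_subset (isClosed_slice hP.isCompact.isClosed) inter_subset_left)
    (convex_slice hP.convex) ?_
  have hface {q} (hq : q ∈ (slice ℓ c P).extremePoints ℝ) := isVertexOf_iff.2 hq
  refine .of_finite_image (f := fun q => faceHull P {q}) (hP.finite_faces.subset ?_) ?_
  · rintro _ ⟨q, hq, rfl⟩
    exact hP.isFaceOf_faceHull (hface hq)
  · intro q hq q' hq' h
    have hslice := congrArg (slice ℓ c) h
    simpa only [slice_faceHull (hface hq), slice_faceHull (hface hq'), singleton_eq_singleton_iff]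
      using hslice

/-- The hyperplane `ℓ = c` separates the vertex `v` of `P` from all other vertices, so that
`slice ℓ c P` is the vertex figure of `P` at `v`. -/
structure CutsOff (ℓ : E3 →L[ℝ] ℝ) (c : ℝ) (P : Set E3) (v : E3) : Prop where
  isVertexOf : IsVertexOf v P
  apply_lt : ℓ v < c
  lt_apply : ∀ w, IsVertexOf w P → w ≠ v → c < ℓ w

lemma exists_cutsOff (hP : IsPolytope P) (hv : IsVertexOf v P) : ∃ ℓ c, CutsOff ℓ c P v := by
  set K := convexHull ℝ (P.extremePoints ℝ \ {v})
  have hvK : v ∉ K := fun h =>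
    (hP.convex.mem_extremePoints_iff_mem_sdiff_convexHull_sdiff.1 (isVertexOf_iff.1 hv)).2
      (convexHull_mono (sdiff_subset_sdiff_left extremePoints_subset) h)
  obtain ⟨ℓ, c, hvc, hc⟩ := geometric_hahn_banach_point_closed (convex_convexHull ℝ _)
    ((hP.finite_extremePoints.sdiff).isClosed_convexHull ℝ) hvK
  exact ⟨ℓ, c, hv, hvc, fun w hw hwv => hc w (subset_convexHull ℝ _ ⟨isVertexOf_iff.1 hw, hwv⟩)⟩

namespace CutsOff

variable (h : CutsOff ℓ c P v)
include h

lemma exists_mem_openSegment (hw : IsVertexOf w P) (hwv : w ≠ v) :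
    ∃ z ∈ openSegment ℝ v w, ℓ z = c := by
  have hv := h.apply_lt
  have hw := h.lt_apply w hw hwv
  have hpos : 0 < ℓ w - ℓ v := by linarith
  refine ⟨_, ⟨(ℓ w - c) / (ℓ w - ℓ v), (c - ℓ v) / (ℓ w - ℓ v), div_pos (by linarith) hpos,
    div_pos (by linarith) hpos, by field_simp; ring, rfl⟩, ?_⟩
  simp only [map_add, map_smul, smul_eq_mul]
  field_simp
  ring

lemma mem_of_slice_nonempty (hP : IsPolytope P) (hB : IsFaceOf B P) (hne : (slice ℓ c B).Nonempty) :
    v ∈ B := by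
  by_contra hv
  obtain ⟨x, hx, hxc⟩ := hne
  have hsub : B ⊆ {x | c < ℓ x} := (hB.isPolytope hP).subset_of_extremePoints_subset
    (convex_halfSpace_gt ℓ.isLinear c) fun w hw => by
      have hwB := hB.isVertexOf_iff_mem.1 (isVertexOf_iff.2 hw)
      exact h.lt_apply w hwB.1 fun hwv => hv (hwv ▸ hwB.2)
  exact (hsub hx).ne' hxc

lemma subset_of_slice_subset (hP : IsPolytope P) (hB : IsFaceOf B P) (hG : IsFaceOf G P)
    (hvG : v ∈ G) (hvB : v ∈ B) (hsub : slice ℓ c B ⊆ slice ℓ c G) : B ⊆ G := by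
  refine (hB.isPolytope hP).subset_of_extremePoints_subset hG.convex fun w hw => ?_
  obtain ⟨hwP, hwB⟩ := hB.isVertexOf_iff_mem.1 (isVertexOf_iff.2 hw)
  obtain rfl | hwv := eq_or_ne w v
  · exact hvG
  obtain ⟨z, hz, hzc⟩ := h.exists_mem_openSegment hwP hwv
  have hzG := (hsub ⟨hB.convex.openSegment_subset hvB hwB hz, hzc⟩).1
  exact hG.isExtreme.right_mem_of_mem_openSegment h.isVertexOf.mem hwP.mem hzG hz

lemma slice_nonempty (hP : IsPolytope P) (hB : IsFaceOf B P) (hvB : v ∈ B) (hd : setDim B ≠ 0) :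
    (slice ℓ c B).Nonempty := by
  by_contra hempty
  refine hd ?_
  have hsub : B ⊆ {v} := h.subset_of_slice_subset hP hB h.isVertexOf rfl hvB
    ((not_nonempty_iff_eq_empty.1 hempty).trans_subset (empty_subset _))
  rw [hsub.antisymm (Set.singleton_subset_iff.2 hvB), setDim, vectorSpan_singleton, finrank_bot]

lemma affineSpan_insert_slice (hP : IsPolytope P) (hB : IsFaceOf B P) (hvB : v ∈ B) :
    affineSpan ℝ (insert v (slice ℓ c B)) = affineSpan ℝ B := by
  refine (affineSpan_mono ℝ (Set.insert_subset hvB inter_subset_left)).antisymm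
    (affineSpan_le.2 ?_)
  set S := affineSpan ℝ (insert v (slice ℓ c B))
  have hvS : v ∈ S := mem_affineSpan ℝ (mem_insert _ _)
  refine (hB.isPolytope hP).subset_of_extremePoints_subset S.convex fun w hw => ?_
  obtain ⟨hwP, hwB⟩ := hB.isVertexOf_iff_mem.1 (isVertexOf_iff.2 hw)
  obtain rfl | hwv := eq_or_ne w v
  · exact hvS
  obtain ⟨z, hz, hzc⟩ := h.exists_mem_openSegment hwP hwv
  have hzS : z ∈ S :=
    mem_affineSpan ℝ (mem_insert_of_mem _ ⟨hB.convex.openSegment_subset hvB hwB hz, hzc⟩)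
  obtain ⟨a, b, -, hb, hab, rfl⟩ := hz
  have hline := AffineMap.lineMap_mem (1 / b) hvS hzS
  obtain rfl : a = 1 - b := by linarith
  have hw : w = AffineMap.lineMap v ((1 - b) • v + b • w) (1 / b) := by
    rw [AffineMap.lineMap_apply_module']
    match_scalars
    · field_simp
    · field_simp
      ring
  rw [hw]
  exact hline

lemma setDim_eq_setDim_slice_add_one (hP : IsPolytope P) (hB : IsFaceOf B P)
    (hne : (slice ℓ c B).Nonempty) : setDim B = setDim (slice ℓ c B) + 1 := by
  have hvB := h.mem_of_slice_nonempty hP hB hne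
  obtain ⟨z, hz⟩ := hne
  have hker : vectorSpan ℝ (slice ℓ c B) ≤ ℓ.toLinearMap.ker := Submodule.span_le.2 (by
    rintro _ ⟨x, hx, y, hy, rfl⟩
    have hxc : ℓ x = c := hx.2
    have hyc : ℓ y = c := hy.2
    simp [hxc, hyc])
  have hnot : v - z ∉ vectorSpan ℝ (slice ℓ c B) := fun hmem => by
    have hzc : ℓ z = c := hz.2
    have h0 : ℓ (v - z) = 0 := hker hmem
    rw [map_sub, hzc] at h0
    linarith [h.apply_lt]
  have hdir := AffineSubspace.direction_affineSpan_insert (p₂ := v) (mem_affineSpan ℝ hz)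
  rw [affineSpan_insert_affineSpan, h.affineSpan_insert_slice hP hB hvB, direction_affineSpan,
    direction_affineSpan, vsub_eq_sub, sup_comm] at hdir
  rw [setDim, hdir, Submodule.finrank_sup_span_singleton hnot, setDim]

lemma bijOn_slice (hP : IsPolytope P) (hE : IsFaceOf E P) (hvE : v ∈ E) : BijOn (slice ℓ c)
    {B | IsFaceOf B P ∧ E ⊆ B ∧ setDim B = d + 1}
    {C | IsFaceOf C (slice ℓ c P) ∧ slice ℓ c E ⊆ C ∧ setDim C = d} := by
  refine ⟨?_, ?_, ?_⟩
  · rintro B ⟨hB, hEB, hd⟩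
    have hne := h.slice_nonempty hP hB (hEB hvE) (by omega)
    have hdim := h.setDim_eq_setDim_slice_add_one hP hB hne
    exact ⟨hB.isFaceOf_slice hne, inter_subset_inter_left _ hEB, by omega⟩
  · rintro B ⟨hB, hEB, -⟩ G ⟨hG, hEG, -⟩ heq
    exact (h.subset_of_slice_subset hP hB hG (hEG hvE) (hEB hvE) heq.subset).antisymm
      (h.subset_of_slice_subset hP hG hB (hEB hvE) (hEG hvE) heq.symm.subset)
  · rintro C ⟨hC, hEC, hd⟩
    have hface := hP.isFaceOf_faceHull hC
    have hslice := slice_faceHull hC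
    have hne : (slice ℓ c (faceHull P C)).Nonempty := hslice.symm ▸ hC.nonempty
    have hv := h.mem_of_slice_nonempty hP hface hne
    refine ⟨faceHull P C, ⟨hface, ?_, ?_⟩, hslice⟩
    · exact h.subset_of_slice_subset hP hE hface hv hvE (hEC.trans hslice.symm.subset)
    · rw [h.setDim_eq_setDim_slice_add_one hP hface hne, hslice, hd]

end CutsOff

end Slices

section FaceCounts

variable {P Q F A E : Set E3} {v : E3}

lemma setDim_eq_zero_iff : setDim A = 0 ↔ A.Subsingleton := by
  rw [setDim, Submodule.finrank_eq_zero, vectorSpan_eq_bot_iff_subsingleton]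

lemma nonempty_of_setDim_ne_zero (h : setDim P ≠ 0) : P.Nonempty := by
  contrapose! h
  exact setDim_eq_zero_iff.2 (h ▸ subsingleton_empty)

lemma setOf_isFaceOf_setDim_eq_zero :
    {C | IsFaceOf C Q ∧ setDim C = 0} = singleton '' {v | IsVertexOf v Q} := by
  ext C
  refine ⟨fun ⟨hC, h0⟩ => ?_, ?_⟩
  · obtain ⟨v, hv⟩ := hC.nonempty
    obtain rfl := (setDim_eq_zero_iff.1 h0).eq_singleton_of_mem hv
    exact ⟨v, hC, rfl⟩
  · rintro ⟨v, hv, rfl⟩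
    exact ⟨hv, setDim_eq_zero_iff.2 subsingleton_singleton⟩

lemma IsPolytope.finite_vertices (hP : IsPolytope P) : {v | IsVertexOf v P}.Finite :=
  hP.finite_extremePoints.subset fun _ => isVertexOf_iff.1

lemma IsPolytope.ncard_vertices_of_setDim_eq_one (hP : IsPolytope P) (h1 : setDim P = 1) :
    {v | IsVertexOf v P}.ncard = 2 := by
  have hcol : Collinear ℝ P := collinear_iff_finrank_le_one.2 h1.le
  obtain ⟨a, ha, b, hb, hab⟩ : {v | IsVertexOf v P}.Nontrivial := by
    by_contra hsub
    rw [not_nontrivial_iff] at hsub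
    obtain ⟨v, hv⟩ := (hP.isFaceOf_self
      (nonempty_of_setDim_ne_zero (h1.trans_ne one_ne_zero))).exists_isVertexOf hP
    have hPv : P ⊆ {v} := hP.subset_of_extremePoints_subset (convex_singleton v)
      fun w hw => hsub (isVertexOf_iff.2 hw) hv.2
    rw [setDim_eq_zero_iff.2 (subsingleton_singleton.anti hPv)] at h1
    exact zero_ne_one h1
  refine ncard_eq_two.2 ⟨a, b, hab, Subset.antisymm (fun w hw => ?_) (pair_subset ha hb)⟩
  by_contra hne
  simp only [mem_insert_iff, mem_singleton_iff, not_or] at hne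
  have hbetween {x y z : E3} (hx : IsVertexOf x P) (hy : IsVertexOf y P) (hz : IsVertexOf z P)
      (hxyz : Wbtw ℝ x y z) : x = y ∨ z = y :=
    (mem_extremePoints_iff_forall_segment.1 (isVertexOf_iff.1 hy)).2 x hx.mem z hz.mem
      (mem_segment_iff_wbtw.2 hxyz)
  have hsub : ({a, b, w} : Set E3) ⊆ P :=
    insert_subset ha.mem (pair_subset hb.mem (IsVertexOf.mem hw))
  obtain h | h | h := (hcol.subset hsub).wbtw_or_wbtw_or_wbtw
  · exact (hbetween ha hb hw h).elim hab hne.2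
  · exact (hbetween hb hw ha h).elim (Ne.symm hne.2) (Ne.symm hne.1)
  · exact (hbetween hw ha hb h).elim hne.1 hab.symm

lemma IsEdgeOf.ncard_vertices (hE : IsEdgeOf E P) (hP : IsPolytope P) :
    {v | IsVertexOf v P ∧ v ∈ E}.ncard = 2 := by
  simp only [← hE.1.isVertexOf_iff_mem]
  exact (hE.1.isPolytope hP).ncard_vertices_of_setDim_eq_one hE.2

lemma IsPolytope.ncard_edges_mem_of_setDim_eq_two (hP : IsPolytope P) (h2 : setDim P = 2)
    (hv : IsVertexOf v P) : {E | IsEdgeOf E P ∧ v ∈ E}.ncard = 2 := by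
  obtain ⟨ℓ, c, h⟩ := exists_cutsOff hP hv
  have hPP := hP.isFaceOf_self ⟨v, hv.mem⟩
  have hdim := h.setDim_eq_setDim_slice_add_one hP hPP
    (h.slice_nonempty hP hPP hv.mem (by omega))
  have hempty : slice ℓ c {v} = ∅ := by
    rw [slice, Set.singleton_inter_eq_empty]
    exact h.apply_lt.ne
  have hbij := (h.bijOn_slice (d := 0) hP hv rfl).ncard_eq
  simp only [hempty, empty_subset, true_and, setOf_isFaceOf_setDim_eq_zero, singleton_subset_iff]
    at hbij
  rw [ncard_image_of_injective _ singleton_injective,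
    hP.isPolytope_slice.ncard_vertices_of_setDim_eq_one (by omega)] at hbij
  rw [← hbij]
  congr 1
  ext E
  simp only [IsEdgeOf, mem_ofPred_eq]
  tauto

lemma IsPolytope.ncard_edges_eq_ncard_vertices (hP : IsPolytope P) (h2 : setDim P = 2) :
    {E | IsEdgeOf E P}.ncard = {v | IsVertexOf v P}.ncard := by
  classical
  have hfin : {E | IsEdgeOf E P}.Finite := hP.finite_faces.subset fun E hE => hE.1
  rw [ncard_eq_toFinset_card _ hfin, ncard_eq_toFinset_card _ hP.finite_vertices]
  refine Nat.eq_of_mul_eq_mul_right two_pos (Finset.card_mul_eq_card_mul (fun E v => v ∈ E) ?_ ?_)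
  · intro E hE
    rw [Finite.mem_toFinset] at hE
    rw [← hE.ncard_vertices hP, ← ncard_coe_finset]
    simp [Finset.bipartiteAbove]
  · intro v hv
    rw [Finite.mem_toFinset] at hv
    rw [← hP.ncard_edges_mem_of_setDim_eq_two h2 hv, ← ncard_coe_finset]
    simp [Finset.bipartiteBelow]

lemma IsFaceOf.isEdgeOf_iff_subset (hF : IsFaceOf F P) : IsEdgeOf E F ↔ IsEdgeOf E P ∧ E ⊆ F :=
  ⟨fun hE => ⟨⟨hF.trans hE.1, hE.2⟩, hE.1.subset⟩,
    fun hE => ⟨hE.1.1.mono hF.subset hE.2, hE.1.2⟩⟩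

lemma IsFacetOf.facetEdges_eq (hF : IsFacetOf F P) (hP : IsPolytope P) :
    facetEdges P F = {v | IsVertexOf v P ∧ v ∈ F}.ncard := by
  simp only [facetEdges, ← hF.1.isEdgeOf_iff_subset, ← hF.1.isVertexOf_iff_mem]
  exact (hF.1.isPolytope hP).ncard_edges_eq_ncard_vertices hF.2

lemma IsEdgeOf.ncard_facets (hE : IsEdgeOf E P) (hP : IsPolytope P) (h3 : setDim P = 3) :
    {F | IsFacetOf F P ∧ E ⊆ F}.ncard = 2 := by
  obtain ⟨v, hvE, hv⟩ := hE.1.exists_isVertexOf hP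
  obtain ⟨ℓ, c, h⟩ := exists_cutsOff hP hv
  have hEne := h.slice_nonempty hP hE.1 hvE (hE.2.trans_ne one_ne_zero)
  have hEdim := h.setDim_eq_setDim_slice_add_one hP hE.1 hEne
  have hPdim := h.setDim_eq_setDim_slice_add_one hP (hP.isFaceOf_self ⟨v, hv.mem⟩)
    (hEne.mono (inter_subset_inter_left _ hE.1.subset))
  obtain ⟨q, hq, hslice⟩ := setOf_isFaceOf_setDim_eq_zero.subset
    (show slice ℓ c E ∈ {C | IsFaceOf C (slice ℓ c P) ∧ setDim C = 0} from
      ⟨hE.1.isFaceOf_slice hEne, by have := hE.2; omega⟩)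
  have hbij := (h.bijOn_slice (d := 1) hP hE.1 hvE).ncard_eq
  have hedges := hP.isPolytope_slice.ncard_edges_mem_of_setDim_eq_two (by omega) hq
  rw [← hslice] at hbij
  simp only [singleton_subset_iff] at hbij
  simp only [IsEdgeOf, IsFacetOf, and_assoc, and_comm (a := setDim _ = _)] at hedges ⊢
  exact hbij.trans hedges

lemma IsEdgeOf.eq_segment (hE : IsEdgeOf E P) (hP : IsPolytope P) :
    ∃ a b, a ≠ b ∧ IsVertexOf a P ∧ IsVertexOf b P ∧ E = segment ℝ a b := by
  obtain ⟨a, b, hab, hset⟩ := ncard_eq_two.1 (hE.ncard_vertices hP)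
  have ha := hset.symm.subset (mem_insert a {b})
  have hb := hset.symm.subset (mem_insert_of_mem a (mem_singleton b))
  refine ⟨a, b, hab, ha.1, hb.1, Subset.antisymm ?_ (hE.1.convex.segment_subset ha.2 hb.2)⟩
  refine (hE.1.isPolytope hP).subset_of_extremePoints_subset (convex_segment a b) fun w hw => ?_
  obtain rfl | rfl := hset.subset (hE.1.isVertexOf_iff_mem.1 (isVertexOf_iff.2 hw))
  · exact left_mem_segment ℝ _ _
  · exact right_mem_segment ℝ _ _

lemma IsFaceOf.apply_le_of_forall_edge_le (hA : IsFaceOf A P) (hP : IsPolytope P)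
    (hv : IsVertexOf v P) (hvA : v ∈ A) {f : E3 →ₗ[ℝ] ℝ}
    (hf : ∀ E, IsEdgeOf E P → v ∈ E → E ⊆ A → ∀ w, IsVertexOf w P → w ∈ E → f w ≤ f v) :
    ∀ w ∈ A, f w ≤ f v := by
  have hconv := convex_halfSpace_le f.isLinear (f v)
  have hPA := hA.isPolytope hP
  have hvA' : IsVertexOf v A := hA.isVertexOf_iff_mem.2 ⟨hv, hvA⟩
  obtain ⟨ℓ, c, h⟩ := exists_cutsOff hPA hvA'
  have hslice : slice ℓ c A ⊆ {x | f x ≤ f v} :=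
    hPA.isPolytope_slice.subset_of_extremePoints_subset hconv fun q hq => by
      obtain ⟨E, ⟨hE, hvE, hdim⟩, hEq⟩ := (h.bijOn_slice (d := 0) hPA hvA' rfl).surjOn
        (show {q} ∈ _ from ⟨isVertexOf_iff.2 hq, by simp [slice, h.apply_lt.ne],
          setDim_eq_zero_iff.2 subsingleton_singleton⟩)
      have hqE : q ∈ E := (hEq.symm.subset rfl).1
      refine (hE.isPolytope hPA).subset_of_extremePoints_subset hconv (fun w hw => ?_) hqE
      have hwE := (hA.trans hE).isVertexOf_iff_mem.1 (isVertexOf_iff.2 hw)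
      exact hf E ⟨hA.trans hE, hdim⟩ (hvE rfl) hE.subset w hwE.1 hwE.2
  refine fun w hw => hPA.subset_of_extremePoints_subset hconv (fun w hw => ?_) hw
  obtain rfl | hwv := eq_or_ne w v
  · exact le_refl (f w)
  obtain ⟨z, hz, hzc⟩ := h.exists_mem_openSegment (isVertexOf_iff.2 hw) hwv
  have hzv : f z ≤ f v :=
    hslice ⟨hA.convex.openSegment_subset hvA (extremePoints_subset hw) hz, hzc⟩
  obtain ⟨a, b, -, hb, hab, rfl⟩ := hz
  simp only [map_add, map_smul, smul_eq_mul] at hzv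
  obtain rfl : a = 1 - b := by linarith
  exact le_of_mul_le_mul_left (by linarith) hb

end FaceCounts

section SimplePolytopes

variable {P E F G X : Set E3} {v : E3}

lemma IsFacetOf.ne_of_isEdgeOf_inter (hF : IsFacetOf F P) (hE : IsEdgeOf (F ∩ G) P) : F ≠ G := by
  rintro rfl
  have := hF.2.symm.trans ((congrArg setDim (inter_self F)).symm.trans hE.2)
  omega

lemma IsEdgeOf.eq_inter (hE : IsEdgeOf E P) (hF : IsFacetOf F P) (hG : IsFacetOf G P) (hne : F ≠ G)
    (hEF : E ⊆ F) (hEG : E ⊆ G) : E = F ∩ G := by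
  have hFG : IsFaceOf (F ∩ G) P := hF.1.inter hG.1 (hE.1.nonempty.mono (subset_inter hEF hEG))
  refine hE.1.eq_of_subset (subset_inter hEF hEG) hFG.subset ?_
  by_contra! hlt
  rw [hE.2] at hlt
  exact hne ((hFG.eq_of_subset inter_subset_left hF.1.subset (hF.2 ▸ hlt)).symm.trans
    (hFG.eq_of_subset inter_subset_right hG.1.subset (hG.2 ▸ hlt)))

lemma IsFacetOf.subset_frontier (hF : IsFacetOf F P) (h3 : setDim P = 3) : F ⊆ frontier P := by
  intro x hx
  refine ⟨subset_closure (hF.1.subset hx), fun hxi => ?_⟩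
  suffices hPF : P = F by
    have := h3.symm.trans ((congrArg setDim hPF).trans hF.2)
    omega
  refine hF.1.subset.antisymm' fun w hw => ?_
  obtain ⟨ε, hε, hxw⟩ := exists_add_smul_mem_of_mem_intrinsicInterior
    (interior_subset_intrinsicInterior hxi) (subset_affineSpan ℝ P hw)
  exact hF.1.isExtreme.left_mem_of_mem_openSegment hw hxw hx (mem_openSegment_add_smul_sub x w hε)

namespace IsSimplePolytope3

variable (hP : IsSimplePolytope3 P)
include hP

lemma exists_ne_facet_of_isEdgeOf (hE : IsEdgeOf E P) (F : Set E3) :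
    ∃ G, IsFacetOf G P ∧ E ⊆ G ∧ G ≠ F := by
  obtain ⟨G, ⟨hG, hEG⟩, hne⟩ := exists_ne_of_one_lt_ncard
    (Nat.one_lt_two.trans_eq (hE.ncard_facets hP.1 hP.2.1).symm) F
  exact ⟨G, hG, hEG, hne⟩

lemma isEdgeOf_inter (hF : IsFacetOf F P) (hG : IsFacetOf G P) (hne : F ≠ G)
    (hFG : (F ∩ G).Nonempty) : IsEdgeOf (F ∩ G) P := by
  obtain ⟨v, ⟨hvF, hvG⟩, hv⟩ := (hF.1.inter hG.1 hFG).exists_isVertexOf hP.1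
  have hedge (E : Set E3) (hE : IsEdgeOf E F ∧ v ∈ E) :
      IsEdgeOf E P ∧ v ∈ E ∧ ∃ X, X ≠ F ∧ IsFacetOf X P ∧ E = F ∩ X := by
    obtain ⟨hEP, hEF⟩ := hF.1.isEdgeOf_iff_subset.1 hE.1
    obtain ⟨X, hX, hEX, hXF⟩ := hP.exists_ne_facet_of_isEdgeOf hEP F
    exact ⟨hEP, hE.2, X, hXF, hX, hEP.eq_inter hF hX hXF.symm hEF hEX⟩
  obtain ⟨E₁, E₂, hE, hset⟩ := ncard_eq_two.1 <|
    (hF.1.isPolytope hP.1).ncard_edges_mem_of_setDim_eq_two hF.2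
      (hF.1.isVertexOf_iff_mem.2 ⟨hv, hvF⟩)
  obtain ⟨hE₁, hv₁, X₁, hX₁F, hX₁, rfl⟩ := hedge E₁ (hset.symm.subset (mem_insert _ _))
  obtain ⟨hE₂, hv₂, X₂, hX₂F, hX₂, rfl⟩ := hedge E₂ (hset.symm.subset (mem_insert_of_mem _ rfl))
  have hfacets : {F, X₁, X₂} = {F | IsFacetOf F P ∧ v ∈ F} := by
    refine eq_of_subset_of_ncard_le ?_ ?_
      (finite_of_ncard_ne_zero ((hP.2.2 v hv).trans_ne three_ne_zero))
    · rintro _ (rfl | rfl | rfl)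
      exacts [⟨hF, hvF⟩, ⟨hX₁, hv₁.2⟩, ⟨hX₂, hv₂.2⟩]
    · rw [hP.2.2 v hv, ncard_eq_three.2 ⟨F, X₁, X₂, hX₁F.symm, hX₂F.symm, ?_, rfl⟩]
      rintro rfl
      exact hE rfl
  obtain rfl | rfl | rfl : G ∈ ({F, X₁, X₂} : Set (Set E3)) := hfacets.symm.subset ⟨hG, hvG⟩
  exacts [absurd rfl hne, hE₁, hE₂]

lemma setOf_facets_of_isEdgeOf (hE : IsEdgeOf E P) (hF : IsFacetOf F P) (hG : IsFacetOf G P)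
    (hne : F ≠ G) (hEF : E ⊆ F) (hEG : E ⊆ G) : {X | IsFacetOf X P ∧ E ⊆ X} = {F, G} := by
  have hcard := hE.ncard_facets hP.1 hP.2.1
  refine (eq_of_subset_of_ncard_le ?_ (by rw [hcard, ncard_pair hne])
    (finite_of_ncard_ne_zero (hcard.trans_ne two_ne_zero))).symm
  rintro _ (rfl | rfl)
  exacts [⟨hF, hEF⟩, ⟨hG, hEG⟩]

lemma exists_inter_eq_of_isEdgeOf (hE : IsEdgeOf E P) :
    ∃ F G, F ≠ G ∧ IsFacetOf F P ∧ IsFacetOf G P ∧ E = F ∩ G := by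
  obtain ⟨F, hF, hEF, -⟩ := hP.exists_ne_facet_of_isEdgeOf hE ∅
  obtain ⟨G, hG, hEG, hne⟩ := hP.exists_ne_facet_of_isEdgeOf hE F
  exact ⟨F, G, hne.symm, hF, hG, hE.eq_inter hF hG hne.symm hEF hEG⟩

end IsSimplePolytope3

lemma IsPolytope.exists_linearMap_injOn_vertices (hP : IsPolytope P) :
    ∃ f : E3 →ₗ[ℝ] ℝ, InjOn f {v | IsVertexOf v P} := by
  have := hP.finite_vertices.to_subtype
  obtain ⟨f, hf⟩ := Module.exists_dual_forall_apply_ne_zero (K := ℝ)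
    (fun p : {p : {v | IsVertexOf v P} × {v | IsVertexOf v P} // p.1 ≠ p.2} =>
      (p.1.1 : E3) - p.1.2)
    fun p => sub_ne_zero.2 (Subtype.val_injective.ne p.2)
  refine ⟨f, fun v hv w hw hvw => by_contra fun hne => ?_⟩
  exact hf ⟨(⟨v, hv⟩, ⟨w, hw⟩), fun h => hne (congrArg Subtype.val h)⟩
    ((map_sub f v w).trans (sub_eq_zero.2 hvw))

lemma IsFaceOf.sInter {𝒜 : Set (Set E3)} (h𝒜 : 𝒜.Nonempty) (hface : ∀ A ∈ 𝒜, IsFaceOf A P)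
    (hne : (⋂₀ 𝒜).Nonempty) : IsFaceOf (⋂₀ 𝒜) P :=
  ⟨hne, isClosed_sInter fun A hA => (hface A hA).2.1, convex_sInter fun A hA => (hface A hA).convex,
    isExtreme_sInter h𝒜 fun A hA => (hface A hA).isExtreme⟩

lemma card_filter_subtype {α : Type*} {p : α → Prop} [Fintype {x // p x}] (q : α → Prop)
    [DecidablePred fun x : {x // p x} => q x] :
    (Finset.univ.filter fun x : {x // p x} => q x).card = {x | p x ∧ q x}.ncard := by
  rw [← Set.ncard_coe_finset, Finset.coe_filter_univ]
  exact (Set.ncard_subtype p {x | q x}).trans (by rw [inter_comm]; rfl)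

namespace IsSimplePolytope3

open scoped Classical in
lemma exists_simpleSphere (hP : IsSimplePolytope3 P) [Fintype {v // IsVertexOf v P}] :
    ∃ S : SimpleSphere {v // IsVertexOf v P} {F // IsFacetOf F P},
      ∀ v F, F ∈ S.facetsAt v ↔ v.1 ∈ F.1 := by
  have : Fintype {F // IsFacetOf F P} := (hP.1.finite_faces.subset fun F hF => hF.1).fintype
  obtain ⟨f, hf⟩ := hP.1.exists_linearMap_injOn_vertices
  refine ⟨{
    facetsAt := fun v => {F | v.1 ∈ F.1}
    height := fun v => f v.1
    card_facetsAt := fun v => (card_filter_subtype _).trans (hP.2.2 v v.2)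
    height_injective := fun v w h => Subtype.ext (hf v.2 w.2 h)
    card_edge := fun e he v hev => ?_
    le_of_forall_edge_le := fun σ v hσv hle w hσw => ?_ }, fun v F => by simp⟩
  · obtain ⟨F, G, hne, rfl⟩ := Finset.card_eq_two.1 he
    simp only [Finset.insert_subset_iff, Finset.singleton_subset_iff, Finset.mem_filter,
      Finset.mem_univ, true_and] at hev ⊢
    exact (card_filter_subtype fun w => w ∈ F.1 ∩ G.1).trans
      ((hP.isEdgeOf_inter F.2 G.2 (Subtype.val_injective.ne hne) ⟨v, hev⟩).ncard_vertices hP.1)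
  · have mem_face (w : {v // IsVertexOf v P}) (hσw : σ ⊆ Finset.univ.filter (fun F => w.1 ∈ F.1)) :
        w.1 ∈ ⋂₀ insert P (Subtype.val '' (σ : Set {F // IsFacetOf F P})) := by
      rintro _ (rfl | ⟨F, hF, rfl⟩)
      exacts [w.2.mem, (Finset.mem_filter.1 (hσw hF)).2]
    have hface : IsFaceOf (⋂₀ insert P (Subtype.val '' (σ : Set {F // IsFacetOf F P}))) P := by
      refine .sInter (insert_nonempty _ _) ?_ ⟨v, mem_face v hσv⟩
      rintro _ (rfl | ⟨F, -, rfl⟩)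
      exacts [hP.1.isFaceOf_self ⟨v, v.2.mem⟩, F.2.1]
    refine hface.apply_le_of_forall_edge_le hP.1 v.2 (mem_face v hσv)
      (fun E hE hvE hEσ w hw hwE => ?_) w (mem_face w hσw)
    obtain ⟨F, G, hne, hF, hG, rfl⟩ := hP.exists_inter_eq_of_isEdgeOf hE
    refine hle {⟨F, hF⟩, ⟨G, hG⟩} (fun X hX => ?_)
      (Finset.card_pair fun h => hne (congrArg Subtype.val h)) ?_ ⟨w, hw⟩ ?_
    · have : X.1 ∈ ({F, G} : Set (Set E3)) := by
        rw [← hP.setOf_facets_of_isEdgeOf hE hF hG hne inter_subset_left inter_subset_right]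
        exact ⟨X.2, fun x hx => hEσ hx X.1 (mem_insert_of_mem _ ⟨X, hX, rfl⟩)⟩
      simpa [Subtype.ext_iff] using this
    · simpa [Finset.insert_subset_iff] using hvE
    · simpa [Finset.insert_subset_iff] using hwE

end IsSimplePolytope3

end SimplePolytopes

section Belts

variable {P : Set E3} {k : ℕ} {B L : Fin k → Set E3}

lemma IsLoop.ne_nxt (hL : IsLoop P L) (hk : 2 ≤ k) (i : Fin k) : L i ≠ L (nxt i) :=
  (hL.2.1 i).ne_of_isEdgeOf_inter (hL.2.2 hk i)

lemma IsBelt.two_le (hB : IsBelt P B) : 2 ≤ k := by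
  have := hB.1
  omega

lemma IsBelt.isFacetOf (hB : IsBelt P B) (i : Fin k) : IsFacetOf (B i) P := hB.2.1.2.1 i

lemma IsBelt.isEdgeOf_inter_nxt (hB : IsBelt P B) (i : Fin k) : IsEdgeOf (B i ∩ B (nxt i)) P :=
  hB.2.1.2.2 hB.two_le i

lemma IsBelt.injective (hB : IsBelt P B) : Function.Injective B := by
  suffices hcons : ∀ p q, p ≠ q → B p = B q → q = nxt p ∨ p = nxt q by
    intro p q heq
    by_contra hpq
    obtain rfl | rfl := hcons p q hpq heq
    exacts [hB.2.1.ne_nxt hB.two_le p heq, hB.2.1.ne_nxt hB.two_le q heq.symm]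
  intro p q hpq heq
  obtain hk | rfl := hB.1.lt_or_eq
  · exact (hB.2.2.2 hk p q hpq).1 (by rw [← heq, inter_self]; exact (hB.isFacetOf p).1.nonempty)
  · have hconsecutive : ∀ p q : Fin 3, p ≠ q → q = nxt p ∨ p = nxt q := by decide
    exact hconsecutive p q hpq

lemma IsBelt.nonempty_inter_or_eq_nxt_nxt {B : Fin 5 → Set E3} (hB : IsBelt P B) (p q : Fin 5) :
    (B p ∩ B q).Nonempty ∨ q = nxt (nxt p) ∨ p = nxt (nxt q) := by
  have hcases : ∀ p q : Fin 5,
      p = q ∨ (q = nxt p ∨ p = nxt q) ∨ q = nxt (nxt p) ∨ p = nxt (nxt q) := by decide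
  obtain rfl | hpq := eq_or_ne p q
  · exact .inl (by rw [inter_self]; exact (hB.isFacetOf p).1.nonempty)
  · exact ((hcases p q).resolve_left hpq).imp_left (hB.2.2.2 (by norm_num) p q hpq).2

namespace IsFullerene

variable (hP : IsFullerene P)
include hP

open scoped Classical in
lemma exists_three_le_card_filter_mem (h3 : 3 ≤ k) (h4 : k ≤ 4) (hB : Function.Injective B)
    (hfacet : ∀ i, IsFacetOf (B i) P) (hadj : ∀ i, (B i ∩ B (nxt i)).Nonempty) :
    ∃ v, 3 ≤ (Finset.univ.filter fun i => v ∈ B i).card := by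
  have : Fintype {v // IsVertexOf v P} := hP.1.1.finite_vertices.fintype
  have : Finite {F // IsFacetOf F P} := hP.1.1.finite_faces.subset fun F hF => hF.1
  obtain ⟨S, hS⟩ := hP.1.exists_simpleSphere
  have hcard (F : {F // IsFacetOf F P}) : (S.verts {F}).card = facetEdges P F := by
    rw [F.2.facetEdges_eq hP.1.1, ← card_filter_subtype]
    congr! 1
    ext v
    simp [hS]
  obtain ⟨v, hv⟩ := S.exists_facetsAt_subset_range (B := fun i => ⟨B i, hfacet i⟩)
    (fun F => by have := hP.2 F F.2; have := hcard F; omega)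
    (fun F => by have := hP.2 F F.2; have := hcard F; omega) h3 h4
    (fun i j h => hB (congrArg Subtype.val h))
    (fun i => by
      obtain ⟨v, hv, hvP⟩ :=
        ((hfacet i).1.inter (hfacet (nxt i)).1 (hadj i)).exists_isVertexOf hP.1.1
      exact ⟨⟨v, hvP⟩, (hS _ _).2 hv.1, (hS _ _).2 hv.2⟩)
  refine ⟨v, (S.card_facetsAt v).symm.le.trans ?_⟩
  refine (Finset.card_le_card fun F hF => ?_).trans
    (Finset.card_image_le (f := fun i => (⟨B i, hfacet i⟩ : {F // IsFacetOf F P})))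
  obtain ⟨i, rfl⟩ := hv F hF
  exact Finset.mem_image_of_mem _ (Finset.mem_filter.2 ⟨Finset.mem_univ i, (hS _ _).1 hF⟩)

lemma not_isBelt_three (B : Fin 3 → Set E3) : ¬ IsBelt P B := by
  classical
  intro hB
  obtain ⟨v, hv⟩ := hP.exists_three_le_card_filter_mem le_rfl (by norm_num) hB.injective
    hB.isFacetOf fun i => (hB.isEdgeOf_inter_nxt i).1.nonempty
  have huniv := Finset.eq_univ_of_card _ (hv.antisymm' (Finset.card_le_univ _))
  have hmem (i : Fin 3) : v ∈ B i := (Finset.filter_eq_self.1 huniv) i (Finset.mem_univ i)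
  exact (hB.2.2.1 rfl 0).subset ⟨⟨hmem _, hmem _⟩, hmem _⟩

lemma not_isBelt_four (B : Fin 4 → Set E3) : ¬ IsBelt P B := by
  classical
  intro hB
  obtain ⟨v, hv⟩ := hP.exists_three_le_card_filter_mem (by norm_num) le_rfl hB.injective
    hB.isFacetOf fun i => (hB.isEdgeOf_inter_nxt i).1.nonempty
  have hopposite : ∀ T : Finset (Fin 4), 3 ≤ T.card → ∃ i ∈ T, nxt (nxt i) ∈ T := by decide
  have hfar : ∀ i : Fin 4, i ≠ nxt (nxt i) ∧ ¬ (nxt (nxt i) = nxt i ∨ i = nxt (nxt (nxt i))) := by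
    decide
  obtain ⟨i, hi, hi'⟩ := hopposite _ hv
  exact (hfar i).2 ((hB.2.2.2 le_rfl i _ (hfar i).1).1
    ⟨v, (Finset.mem_filter.1 hi).2, (Finset.mem_filter.1 hi').2⟩)

end IsFullerene

end Belts

section SmallBelts

variable {P F G H K : Set E3}

namespace IsSimplePolytope3

variable (hP : IsSimplePolytope3 P)
include hP

lemma nonempty_inter_inter (h3 : ∀ B : Fin 3 → Set E3, ¬ IsBelt P B) (hF : IsFacetOf F P)
    (hG : IsFacetOf G P) (hH : IsFacetOf H P) (hne₁ : F ≠ G) (hne₂ : G ≠ H) (hne₃ : H ≠ F)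
    (hFG : (F ∩ G).Nonempty) (hGH : (G ∩ H).Nonempty) (hHF : (H ∩ F).Nonempty) :
    (F ∩ G ∩ H).Nonempty := by
  by_contra! hempty
  refine h3 ![F, G, H] ⟨le_rfl, ⟨by norm_num, fun i => ?_, fun _ i => ?_⟩, fun _ i => ?_,
    fun h => absurd h (by norm_num)⟩
  · fin_cases i
    exacts [hF, hG, hH]
  · fin_cases i
    exacts [hP.isEdgeOf_inter hF hG hne₁ hFG, hP.isEdgeOf_inter hG hH hne₂ hGH,
      hP.isEdgeOf_inter hH hF hne₃ hHF]
  · have hrot : G ∩ H ∩ F = ∅ := by rw [inter_comm, ← inter_assoc, hempty]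
    fin_cases i
    exacts [hempty, hrot, by rw [← hrot, inter_comm, inter_assoc]; rfl]

lemma nonempty_inter_or_nonempty_inter (h4 : ∀ B : Fin 4 → Set E3, ¬ IsBelt P B)
    (hF : IsFacetOf F P) (hG : IsFacetOf G P) (hH : IsFacetOf H P) (hK : IsFacetOf K P)
    (hne₁ : F ≠ G) (hne₂ : G ≠ H) (hne₃ : H ≠ K) (hne₄ : K ≠ F)
    (hFG : (F ∩ G).Nonempty) (hGH : (G ∩ H).Nonempty) (hHK : (H ∩ K).Nonempty)
    (hKF : (K ∩ F).Nonempty) : (F ∩ H).Nonempty ∨ (G ∩ K).Nonempty := by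
  by_contra! hempty
  obtain ⟨hFH, hGK⟩ := hempty
  refine h4 ![F, G, H, K] ⟨by norm_num, ⟨by norm_num, fun i => ?_, fun _ i => ?_⟩,
    fun h => absurd h (by norm_num), fun _ p q hpq => ?_⟩
  · fin_cases i
    exacts [hF, hG, hH, hK]
  · fin_cases i
    exacts [hP.isEdgeOf_inter hF hG hne₁ hFG, hP.isEdgeOf_inter hG hH hne₂ hGH,
      hP.isEdgeOf_inter hH hK hne₃ hHK, hP.isEdgeOf_inter hK hF hne₄ hKF]
  · have hGF := inter_comm F G ▸ hFG
    have hHG := inter_comm G H ▸ hGH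
    have hKH := inter_comm H K ▸ hHK
    have hFK := inter_comm K F ▸ hKF
    have hHF := inter_comm F H ▸ hFH
    have hKG := inter_comm G K ▸ hGK
    fin_cases p <;> fin_cases q <;> simp_all [nxt]

end IsSimplePolytope3

end SmallBelts

section Components

variable {P F G γ A C D : Set E3}

lemma IsCompOf.disjoint (hC : IsCompOf C A) (hD : IsCompOf D A) (hne : C ≠ D) : Disjoint C D := by
  obtain ⟨p, -, rfl⟩ := hC
  obtain ⟨q, -, rfl⟩ := hD
  rw [disjoint_left]
  exact fun x hp hq => hne ((connectedComponentIn_eq hp).trans (connectedComponentIn_eq hq).symm)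

lemma IsCompOf.closure_inter_subset (hC : IsCompOf C A) : closure C ∩ A ⊆ C := by
  obtain ⟨p, hp, rfl⟩ := hC
  have hsub := subset_inter subset_closure (connectedComponentIn_subset A p)
  exact (isPreconnected_connectedComponentIn.subset_closure hsub
    inter_subset_left).subset_connectedComponentIn (hsub (mem_connectedComponentIn hp))
    inter_subset_right

lemma IsFacetOf.diff_subset_of_isCompOf (hF : IsFacetOf F P) (h3 : setDim P = 3)
    (hC : IsCompOf C (frontier P \ γ)) (hFC : intrinsicInterior ℝ F ⊆ C) : F \ γ ⊆ C := fun _ hx =>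
  hC.closure_inter_subset ⟨closure_mono hFC (subset_closure_intrinsicInterior hF.1.convex hx.1),
    hF.subset_frontier h3 hx.1, hx.2⟩

lemma IsFacetOf.inter_subset_of_isCompOf (hF : IsFacetOf F P) (hG : IsFacetOf G P)
    (h3 : setDim P = 3) (hC : IsCompOf C (frontier P \ γ)) (hD : IsCompOf D (frontier P \ γ))
    (hne : C ≠ D) (hFC : intrinsicInterior ℝ F ⊆ C) (hGD : intrinsicInterior ℝ G ⊆ D) :
    F ∩ G ⊆ γ := by
  intro x hx
  by_contra hxγ
  exact disjoint_left.1 (hC.disjoint hD hne) (hF.diff_subset_of_isCompOf h3 hC hFC ⟨hx.1, hxγ⟩)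
    (hG.diff_subset_of_isCompOf h3 hD hGD ⟨hx.2, hxγ⟩)

lemma IsFacetOf.ne_of_isCompOf (hF : IsFacetOf F P) (hC : IsCompOf C A) (hD : IsCompOf D A)
    (hne : C ≠ D) (hFC : intrinsicInterior ℝ F ⊆ C) (hGD : intrinsicInterior ℝ G ⊆ D) : F ≠ G := by
  rintro rfl
  obtain ⟨x, hx⟩ := hF.1.nonempty.intrinsicInterior hF.1.convex
  exact disjoint_left.1 (hC.disjoint hD hne) (hFC hx) (hGD hx)

end Components

section Walks

variable {P E G H K γ : Set E3} {a b w : E3} {k n : ℕ} {L : Fin k → Set E3} {v : Fin n → E3}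
  {φ : Fin n → Fin k} {t t' : Fin n}

lemma IsVertexOf.eq_or_eq_of_mem_segment (hw : IsVertexOf w P) (ha : a ∈ P) (hb : b ∈ P)
    (hmem : w ∈ segment ℝ a b) : w = a ∨ w = b := by
  rcases (mem_extremePoints_iff_forall_segment.1 (isVertexOf_iff.1 hw)).2 a ha b hb hmem with h | h
  exacts [.inl h.symm, .inr h.symm]

lemma IsSimpleEdgeCycleVia.exists_eq_segment (hγ : IsSimpleEdgeCycleVia P γ v)
    (hP : IsPolytope P) (hE : IsEdgeOf E P) (hEγ : E ⊆ γ) :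
    ∃ t, E = segment ℝ (v t) (v (nxt t)) := by
  obtain ⟨a, b, -, ha, hb, rfl⟩ := hE.eq_segment hP
  obtain ⟨-, -, -, hedge, rfl⟩ := hγ
  have hmid := midpoint_mem_openSegment (𝕜 := ℝ) a b
  obtain ⟨t, ht⟩ := mem_iUnion.1 (hEγ (openSegment_subset_segment ℝ _ _ hmid))
  exact ⟨t, hE.1.eq_of_subset ((hedge t).1.segment_subset ha.mem hb.mem hmid ht)
    (hedge t).1.subset ((hedge t).2.trans hE.2.symm).le⟩

/-- The vertices `v` trace the simple edge-cycle `γ`, and the loop `L` runs along it, its facet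
`L (φ t)` containing the `t`-th edge of `γ`. -/
structure RunsAlong (P γ : Set E3) (L : Fin k → Set E3) (v : Fin n → E3) (φ : Fin n → Fin k) :
    Prop where
  isLoop : IsLoop P L
  isSimpleEdgeCycleVia : IsSimpleEdgeCycleVia P γ v
  segment_subset : ∀ t, segment ℝ (v t) (v (nxt t)) ⊆ L (φ t)
  step : ∀ t, φ (nxt t) = φ t ∨ φ (nxt t) = nxt (φ t)

lemma WalksRound.exists_runsAlong {C : Set E3} (h : WalksRound P γ C L) :
    ∃ (n : ℕ) (v : Fin n → E3) (φ : Fin n → Fin k), RunsAlong P γ L v φ ∧ φ.Surjective := by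
  obtain ⟨hL, -, n, v, φ, hγ, hsub, hstep, hφ, -⟩ := h
  exact ⟨n, v, φ, ⟨hL, hγ, hsub, hstep⟩, hφ⟩

namespace RunsAlong

variable (h : RunsAlong P γ L v φ)
include h

lemma isFacetOf (i : Fin k) : IsFacetOf (L i) P := h.isLoop.2.1 i

lemma isVertexOf (t : Fin n) : IsVertexOf (v t) P := h.isSimpleEdgeCycleVia.2.2.1 t

lemma isEdgeOf (t : Fin n) : IsEdgeOf (segment ℝ (v t) (v (nxt t))) P :=
  h.isSimpleEdgeCycleVia.2.2.2.1 t

lemma segment_subset_cycle (t : Fin n) : segment ℝ (v t) (v (nxt t)) ⊆ γ := by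
  rw [h.isSimpleEdgeCycleVia.2.2.2.2]
  exact subset_iUnion (fun t => segment ℝ (v t) (v (nxt t))) t

lemma exists_eq_segment (hP : IsPolytope P) (hE : IsEdgeOf E P) (hEγ : E ⊆ γ) :
    ∃ t, E = segment ℝ (v t) (v (nxt t)) := h.isSimpleEdgeCycleVia.exists_eq_segment hP hE hEγ

lemma apply_nxt_eq (hk : 2 ≤ k) (heq : L (φ t) = L (φ (nxt t))) : φ t = φ (nxt t) := by
  rcases h.step t with hstep | hstep
  · exact hstep.symm
  · exact absurd (hstep ▸ heq) (h.isLoop.ne_nxt hk _)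

lemma eq_of_common_endpoint (hk : 2 ≤ k) (heq : L (φ t) = L (φ t')) (hw : w = v t ∨ w = v (nxt t))
    (hw' : w = v t' ∨ w = v (nxt t')) : φ t = φ t' := by
  have hv := h.isSimpleEdgeCycleVia.2.1
  rcases hw with rfl | rfl <;> rcases hw' with hw' | hw' <;> obtain hw' := hv hw'
  · rw [hw']
  · subst hw'
    exact (h.apply_nxt_eq hk heq.symm).symm
  · subst hw'
    exact h.apply_nxt_eq hk heq
  · rw [nxt_injective hw']

lemma eq_endpoint_of_isVertexOf (hw : IsVertexOf w P) (hG : IsFacetOf G P) (hne : L (φ t) ≠ G)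
    (htG : segment ℝ (v t) (v (nxt t)) ⊆ G) (hwL : w ∈ L (φ t)) (hwG : w ∈ G) :
    w = v t ∨ w = v (nxt t) := by
  refine hw.eq_or_eq_of_mem_segment (h.isVertexOf t).mem (h.isVertexOf (nxt t)).mem ?_
  rw [(h.isEdgeOf t).eq_inter (h.isFacetOf _) hG hne (h.segment_subset t) htG]
  exact ⟨hwL, hwG⟩

lemma eq_of_subset_of_nonempty_inter (hP : IsSimplePolytope3 P)
    (h3 : ∀ B : Fin 3 → Set E3, ¬ IsBelt P B) (hk : 2 ≤ k) (heq : L (φ t) = L (φ t'))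
    (hG : IsFacetOf G P) (hH : IsFacetOf H P) (hLG : L (φ t) ≠ G) (hLH : L (φ t) ≠ H)
    (htG : segment ℝ (v t) (v (nxt t)) ⊆ G) (htH : segment ℝ (v t') (v (nxt t')) ⊆ H)
    (hGH : (G ∩ H).Nonempty) : φ t = φ t' := by
  have hmeetG : (L (φ t) ∩ G).Nonempty :=
    (h.isEdgeOf t).1.nonempty.mono (subset_inter (h.segment_subset t) htG)
  have hmeetH : (H ∩ L (φ t)).Nonempty :=
    (h.isEdgeOf t').1.nonempty.mono (subset_inter htH (heq ▸ h.segment_subset t'))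
  obtain ⟨w, ⟨⟨hwL, hwG⟩, hwH⟩, hw⟩ : ∃ w ∈ L (φ t) ∩ G ∩ H, IsVertexOf w P := by
    have hface : (L (φ t) ∩ G ∩ H).Nonempty := by
      obtain rfl | hne := eq_or_ne G H
      · rwa [inter_assoc, inter_self]
      · exact hP.nonempty_inter_inter h3 (h.isFacetOf _) hG hH hLG hne hLH.symm hmeetG hGH hmeetH
    exact (((h.isFacetOf _).1.inter hG.1 hmeetG).inter hH.1 hface).exists_isVertexOf hP.1
  exact h.eq_of_common_endpoint hk heq (h.eq_endpoint_of_isVertexOf hw hG hLG htG hwL hwG)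
    (h.eq_endpoint_of_isVertexOf hw hH (heq ▸ hLH) htH (heq ▸ hwL) hwH)

lemma exists_eq_and_segment_subset (hP : IsSimplePolytope3 P) (hH : IsFacetOf H P)
    (hLH : ∀ i, L i ≠ H) {i : Fin k} (hLHγ : L i ∩ H ⊆ γ) (hmeet : (L i ∩ H).Nonempty) :
    ∃ s, L (φ s) = L i ∧ segment ℝ (v s) (v (nxt s)) ⊆ H := by
  have hedge := hP.isEdgeOf_inter (h.isFacetOf i) hH (hLH i) hmeet
  obtain ⟨s, hs⟩ := h.exists_eq_segment hP.1 hedge hLHγ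
  have hmem : L (φ s) ∈ {X | IsFacetOf X P ∧ L i ∩ H ⊆ X} :=
    ⟨h.isFacetOf _, hs ▸ h.segment_subset s⟩
  rw [hP.setOf_facets_of_isEdgeOf hedge (h.isFacetOf i) hH (hLH i) inter_subset_left
    inter_subset_right] at hmem
  exact ⟨s, hmem.resolve_right (hLH _), hs ▸ inter_subset_right⟩

lemma eq_of_subset_of_chain (hP : IsSimplePolytope3 P) (h3 : ∀ B : Fin 3 → Set E3, ¬ IsBelt P B)
    (h4 : ∀ B : Fin 4 → Set E3, ¬ IsBelt P B) (hk : 2 ≤ k) (heq : L (φ t) = L (φ t'))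
    (hG : IsFacetOf G P) (hH : IsFacetOf H P) (hK : IsFacetOf K P) (hLG : ∀ i, L i ≠ G)
    (hLH : ∀ i, L i ≠ H) (hLK : ∀ i, L i ≠ K) (hγ : L (φ t) ∩ H ⊆ γ)
    (htG : segment ℝ (v t) (v (nxt t)) ⊆ G) (htK : segment ℝ (v t') (v (nxt t')) ⊆ K)
    (hGH : (G ∩ H).Nonempty) (hHK : (H ∩ K).Nonempty) (hGne : G ≠ H) (hKne : H ≠ K) :
    φ t = φ t' := by
  by_cases hGK : (G ∩ K).Nonempty
  · exact h.eq_of_subset_of_nonempty_inter hP h3 hk heq hG hK (hLG _) (hLK _) htG htK hGK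
  have hmeetG : (L (φ t) ∩ G).Nonempty :=
    (h.isEdgeOf t).1.nonempty.mono (subset_inter (h.segment_subset t) htG)
  have hmeetK : (K ∩ L (φ t)).Nonempty :=
    (h.isEdgeOf t').1.nonempty.mono (subset_inter htK (heq ▸ h.segment_subset t'))
  have hmeetH := (hP.nonempty_inter_or_nonempty_inter h4 (h.isFacetOf _) hG hH hK (hLG _) hGne
    hKne (hLK _).symm hmeetG hGH hHK hmeetK).resolve_right hGK
  obtain ⟨s, hs, hsH⟩ := h.exists_eq_and_segment_subset hP hH hLH hγ hmeetH
  exact (h.eq_of_subset_of_nonempty_inter hP h3 hk hs.symm hG hH (hLG _) (hLH _) htG hsH hGH).trans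
    (h.eq_of_subset_of_nonempty_inter hP h3 hk (hs.trans heq) hH hK (hLH _) (hLK _) hsH htK hHK)

/-- If two edges of `γ` lie in the same facet of `L`, then the belt facets `B p` and `B q` on their
other sides are equal or adjacent, or they have a common neighbour `B (nxt p)` or `B (nxt q)`. -/
lemma eq_of_apply_eq (hP : IsSimplePolytope3 P) (h3 : ∀ B : Fin 3 → Set E3, ¬ IsBelt P B)
    (h4 : ∀ B : Fin 4 → Set E3, ¬ IsBelt P B) {B : Fin 5 → Set E3} (hB : IsBelt P B)
    (hLB : ∀ i p, L i ≠ B p) (hγ : ∀ i p, L i ∩ B p ⊆ γ)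
    (hγB : ∀ t, ∃ p, segment ℝ (v t) (v (nxt t)) ⊆ B p) (hk : 2 ≤ k)
    (heq : L (φ t) = L (φ t')) : φ t = φ t' := by
  have hmeet (p) : (B p ∩ B (nxt p)).Nonempty := (hB.isEdgeOf_inter_nxt p).1.nonempty
  have hne (p) : B p ≠ B (nxt p) := hB.2.1.ne_nxt hB.two_le p
  obtain ⟨p, hp⟩ := hγB t
  obtain ⟨q, hq⟩ := hγB t'
  obtain hpq | rfl | rfl := hB.nonempty_inter_or_eq_nxt_nxt p q
  · exact h.eq_of_subset_of_nonempty_inter hP h3 hk heq (hB.isFacetOf p) (hB.isFacetOf q)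
      (hLB _ p) (hLB _ q) hp hq hpq
  · exact h.eq_of_subset_of_chain hP h3 h4 hk heq (hB.isFacetOf p) (hB.isFacetOf _)
      (hB.isFacetOf _) (hLB · _) (hLB · _) (hLB · _) (hγ _ _) hp hq (hmeet p) (hmeet _) (hne p)
      (hne _)
  · exact (h.eq_of_subset_of_chain hP h3 h4 hk heq.symm (hB.isFacetOf q) (hB.isFacetOf _)
      (hB.isFacetOf _) (hLB · _) (hLB · _) (hLB · _) (hγ _ _) hq hp (hmeet q) (hmeet _) (hne q)
      (hne _)).symm

end RunsAlong

end Walks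

theorem loop_bordering_five_belt_injective_general (P : Set E3) (hP : IsSimplePolytope3 P)
    (h3 : ∀ B : Fin 3 → Set E3, ¬ IsBelt P B) (h4 : ∀ B : Fin 4 → Set E3, ¬ IsBelt P B)
    {k : ℕ} (L : Fin k → Set E3) (B : Fin 5 → Set E3) (hB : IsBelt P B) (hbord : Borders P L B) :
    Function.Injective L := by
  obtain ⟨γ, C, D, hC, hD, hCD, hL, hBγ⟩ := hbord
  have hLC := hL.2.1
  have hBD := hBγ.2.1
  obtain ⟨n, v, φ, hwalk, hφ⟩ := hL.exists_runsAlong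
  obtain ⟨n', v', φ', hwalk', -⟩ := hBγ.exists_runsAlong
  have hLB (i p) : L i ≠ B p := (hwalk.isFacetOf i).ne_of_isCompOf hC hD hCD (hLC i) (hBD p)
  have hLBγ (i p) : L i ∩ B p ⊆ γ := (hwalk.isFacetOf i).inter_subset_of_isCompOf (hB.isFacetOf p)
    hP.2.1 hC hD hCD (hLC i) (hBD p)
  have hmem_belt (t) : ∃ p, segment ℝ (v t) (v (nxt t)) ⊆ B p := by
    obtain ⟨s, hs⟩ := hwalk'.exists_eq_segment hP.1 (hwalk.isEdgeOf t)
      (hwalk.segment_subset_cycle t)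
    exact ⟨φ' s, hs ▸ hwalk'.segment_subset s⟩
  intro i j hij
  obtain ⟨t, rfl⟩ := hφ i
  obtain ⟨t', rfl⟩ := hφ j
  by_contra hne
  have hk : 2 ≤ k := by omega
  exact hne (hwalk.eq_of_apply_eq hP h3 h4 hB hLB hLBγ hmem_belt hk hij)

/-- If a `k`-loop borders a 5-belt of a fullerene, then its facets are pairwise
different. -/
theorem loop_bordering_five_belt_injective (P : Set E3) (hP : IsFullerene P)
    {k : ℕ} (L : Fin k → Set E3) (B : Fin 5 → Set E3)
    (hL : IsLoop P L) (hB : IsBelt P B) (hbord : Borders P L B) :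
    Function.Injective L :=
  loop_bordering_five_belt_injective_general P hP.1 hP.not_isBelt_three hP.not_isBelt_four L B hB
    hbord
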